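/- arXiv:2304.04010 — 4 statements merged into one kernel-verified Lean document; each statement's English description precedes it below -/
import Mathlib

section
/- Let n ≥ 1 and let F = n^{-1/2} · Σ_{j=1}^n w_j τ(w_j^{(0)}), where w_1,…,w_n, w_1^{(0)},…,w_n^{(0)} are i.i.d. standard Gaussian random variables and τ ∈ C²(ℝ) satisfies |τ(x)| ≤ a + b|x|^γ, |τ'(x)| ≤ a + b|x|^γ and |τ''(x)| ≤ a + b|x|^γ for all x ∈ ℝ, for some constants a, b, γ ≥ 0. Let σ² = E[τ²(Z)] where Z ~ N(0,1), and let N ~ N(0, σ²). Then for every n ≥ 1, d_{W1}(F, N) ≤ (1/√n) · √(8/(σ²π)) · √(3(1+√2)) · ‖a + b|Z|^γ‖_{L⁴}², where ‖X‖_{L⁴} = (E[X⁴])^{1/4}. -/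
open MeasureTheory ProbabilityTheory Real

/-- The 1-Wasserstein distance between two distributions:
`sup_h |E[h(X)] − E[h(Y)]|` over 1-Lipschitz functions `h`. -/
noncomputable def dW1 {E : Type*} [MeasurableSpace E] [PseudoMetricSpace E]
    (μ ν : Measure E) : ℝ :=
  ⨆ h : {h : E → ℝ // LipschitzWith 1 h}, |(∫ x, h.1 x ∂μ) - ∫ x, h.1 x ∂ν|


open scoped NNReal ENNReal

theorem lin_law {n : ℕ} (c : Fin n → ℝ) :
    Measure.map (fun x : Fin n → ℝ => ∑ j, x j * c j) (Measure.pi fun _ : Fin n => gaussianReal 0 1)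
      = Measure.map (fun z : ℝ => √(∑ j, c j ^ 2) * z) (gaussianReal 0 1) := by
  have hmeas : Measurable (fun x : Fin n → ℝ => ∑ j, x j * c j) := by fun_prop
  have : IsProbabilityMeasure (Measure.map (fun x : Fin n → ℝ => ∑ j, x j * c j)
      (Measure.pi fun _ : Fin n => gaussianReal 0 1)) :=
    Measure.isProbabilityMeasure_map hmeas.aemeasurable
  have : IsProbabilityMeasure (Measure.map (fun z : ℝ => √(∑ j, c j ^ 2) * z) (gaussianReal 0 1)) :=
    Measure.isProbabilityMeasure_map (by fun_prop)
  apply Measure.ext_of_charFun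
  ext t
  have key : ∀ s : ℝ, ∫ x : ℝ, Complex.exp (s * x * Complex.I) ∂(gaussianReal 0 1)
      = Complex.exp (-(s ^ 2 / 2 : ℝ)) := by
    intro s
    rw [← charFun_apply_real, charFun_gaussianReal]
    congr 1
    push_cast
    simp
  rw [charFun_apply_real, charFun_apply_real, integral_map hmeas.aemeasurable (by fun_prop),
    integral_map (by fun_prop) (by fun_prop)]
  have h1 : ∀ x : Fin n → ℝ, Complex.exp (t * ((∑ j, x j * c j : ℝ) : ℂ) * Complex.I)
      = ∏ j, Complex.exp (((t * c j : ℝ) : ℂ) * (x j : ℂ) * Complex.I) := by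
    intro x
    rw [← Complex.exp_sum]
    congr 1
    push_cast
    rw [Finset.mul_sum, Finset.sum_mul]
    refine Finset.sum_congr rfl fun j _ => ?_
    ring
  have h2 : ∀ x : ℝ, Complex.exp (t * ((√(∑ j, c j ^ 2) * x : ℝ) : ℂ) * Complex.I)
      = Complex.exp (((t * √(∑ j, c j ^ 2) : ℝ) : ℂ) * (x : ℂ) * Complex.I) := by
    intro x
    congr 1
    push_cast
    ring
  simp_rw [h1, h2]
  rw [integral_fintype_prod_eq_prod
    (f := fun j (x : ℝ) => Complex.exp (((t * c j : ℝ) : ℂ) * (x : ℂ) * Complex.I))]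
  simp_rw [key]
  rw [← Complex.exp_sum]
  congr 1
  rw [mul_pow, Real.sq_sqrt (by positivity)]
  push_cast
  rw [Finset.sum_neg_distrib, Finset.mul_sum, Finset.sum_div]
  simp_rw [mul_pow]

theorem gauss_scale (v : ℝ) (hv : 0 ≤ v) :
    gaussianReal 0 v.toNNReal = Measure.map (fun z : ℝ => √v * z) (gaussianReal 0 1) := by
  rw [gaussianReal_map_const_mul]
  congr 1
  · simp
  · ext
    simp [hv]

theorem abs_moment : ∫ z, |z| ∂(gaussianReal 0 1) ≤ 1 := by
  have hL : MemLp (fun z : ℝ => z) 2 (gaussianReal 0 1) := memLp_id_gaussianReal' 2 (by simp)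
  have h2 : ∫ z, z ^ 2 ∂(gaussianReal 0 1) = 1 := by
    have := variance_fun_id_gaussianReal (μ := 0) (v := 1)
    rw [variance_eq_integral (by fun_prop)] at this
    simpa using this
  have hi := hL.integrable_sq
  calc ∫ z, |z| ∂(gaussianReal 0 1) ≤ ∫ z, (1 / 2 + z ^ 2 / 2 : ℝ) ∂(gaussianReal 0 1) := by
        apply integral_mono
        · exact (hL.integrable one_le_two).abs
        · exact (integrable_const _).add (hi.div_const 2)
        · intro z
          change |z| ≤ 1 / 2 + z ^ 2 / 2
          nlinarith [sq_nonneg (|z| - 1), sq_abs z]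
    _ = 1 := by
        rw [integral_add (integrable_const _) (hi.div_const 2), integral_div (2:ℝ) (fun z : ℝ => z ^ 2), h2]
        norm_num

theorem int_abs_sq {Ω : Type*} [MeasurableSpace Ω] (μ : Measure Ω) [IsProbabilityMeasure μ]
    (f : Ω → ℝ) (hf : MemLp f 2 μ) : (∫ x, |f x| ∂μ) ^ 2 ≤ ∫ x, f x ^ 2 ∂μ := by
  have h := variance_nonneg (fun x => |f x|) μ
  rw [variance_eq_sub (X := fun x => |f x|) hf.abs] at h
  simp only [Pi.pow_apply, sq_abs] at h
  linarith

theorem memLp_growth (a b γ : ℝ) (hγ : 0 ≤ γ) :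
    MemLp (fun z : ℝ => a + b * |z| ^ γ) 4 (gaussianReal 0 1) := by
  refine (memLp_const a).add (MemLp.const_mul ?_ b)
  rcases hγ.eq_or_lt with h | h
  · simpa [← h] using memLp_const (1 : ℝ)
  · have := (memLp_id_gaussianReal' (μ := 0) (v := 1) (4 * ENNReal.ofReal γ)
      (by finiteness)).norm_rpow_div (ENNReal.ofReal γ)
    rw [ENNReal.mul_div_cancel_right (by simpa using h) (by simp)] at this
    simpa [ENNReal.toReal_ofReal hγ] using this

section main
variable (τ : ℝ → ℝ) (hc : Continuous τ) (hL : MemLp τ 4 (gaussianReal 0 1)) (n : ℕ) (hn : 1 ≤ n)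

/-- The conditional variance. -/
noncomputable def sampVar (y : Fin n → ℝ) : ℝ := (n : ℝ)⁻¹ * ∑ j, τ (y j) ^ 2

theorem memLp_sq {τ : ℝ → ℝ} (hL : MemLp τ 4 (gaussianReal 0 1)) :
    MemLp (fun z => τ z ^ 2) 2 (gaussianReal 0 1) := by
  have := hL.norm_rpow_div 2
  have e : (4 : ℝ≥0∞) / 2 = 2 := by
    rw [show (4 : ℝ≥0∞) = 2 * 2 by norm_num]
    exact ENNReal.mul_div_cancel_right (by simp) (by simp)
  rw [e] at this
  simpa using this

theorem memLp_condVar {τ : ℝ → ℝ} (hL : MemLp τ 4 (gaussianReal 0 1)) (n : ℕ) :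
    MemLp (sampVar τ n) 2 (Measure.pi fun _ : Fin n => gaussianReal 0 1) := by
  have hi : ∀ j ∈ (Finset.univ : Finset (Fin n)), MemLp (fun y : Fin n → ℝ => τ (y j) ^ 2) 2
      (Measure.pi fun _ : Fin n => gaussianReal 0 1) := fun j _ => (memLp_sq hL).comp_measurePreserving
    (measurePreserving_eval (fun _ : Fin n => gaussianReal 0 1) j)
  exact (memLp_finsetSum _ hi).const_mul _

theorem mean_condVar {τ : ℝ → ℝ} (hL : MemLp τ 4 (gaussianReal 0 1)) (n : ℕ) (hn : 1 ≤ n) :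
    ∫ y, sampVar τ n y ∂(Measure.pi fun _ : Fin n => gaussianReal 0 1)
      = ∫ z, τ z ^ 2 ∂(gaussianReal 0 1) := by
  unfold sampVar
  have hi : ∀ j : Fin n, MemLp (fun y : Fin n → ℝ => τ (y j) ^ 2) 2
      (Measure.pi fun _ : Fin n => gaussianReal 0 1) := fun j =>
    (memLp_sq hL).comp_measurePreserving
      (measurePreserving_eval (fun _ : Fin n => gaussianReal 0 1) j)
  rw [integral_const_mul, integral_finsetSum _ fun j _ => (hi j).integrable one_le_two]
  have he : ∀ j : Fin n, ∫ y : Fin n → ℝ, τ (y j) ^ 2 ∂(Measure.pi fun _ : Fin n => gaussianReal 0 1)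
      = ∫ z, τ z ^ 2 ∂(gaussianReal 0 1) := by
    intro j
    have mp := measurePreserving_eval (fun _ : Fin n => gaussianReal 0 1) j
    have := integral_map (μ := (Measure.pi fun _ : Fin n => gaussianReal 0 1))
      (φ := Function.eval j) mp.aemeasurable (f := fun z => τ z ^ 2)
      (by rw [mp.map_eq]; exact (memLp_sq hL).1)
    rw [mp.map_eq] at this
    exact this.symm
  simp_rw [he]
  have : (n : ℝ) ≠ 0 := by positivity
  simp [this]

theorem var_condVar {τ : ℝ → ℝ} (hL : MemLp τ 4 (gaussianReal 0 1)) (n : ℕ) (hn : 1 ≤ n) :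
    ∫ y, (sampVar τ n y - ∫ z, τ z ^ 2 ∂(gaussianReal 0 1)) ^ 2
        ∂(Measure.pi fun _ : Fin n => gaussianReal 0 1)
      ≤ (n : ℝ)⁻¹ * ∫ z, τ z ^ 4 ∂(gaussianReal 0 1) := by
  rw [← mean_condVar hL n hn, ← variance_eq_integral (memLp_condVar hL n).1.aemeasurable]
  have e : sampVar τ n = fun y => (n : ℝ)⁻¹ * (∑ j : Fin n, fun ω : Fin n → ℝ => τ (ω j) ^ 2) y := by
    ext y; simp [sampVar]
  rw [e, variance_const_mul, variance_sum_pi (X := fun _ z => τ z ^ 2) fun j => memLp_sq hL]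
  have hv := variance_le_expectation_sq (memLp_sq hL).1
  have e4 : ∫ x, ((fun z => τ z ^ 2) ^ 2) x ∂(gaussianReal 0 1)
      = ∫ z, τ z ^ 4 ∂(gaussianReal 0 1) := by
    congr 1; ext z; simp only [Pi.pow_apply]; ring
  rw [e4] at hv
  have hn0 : (n : ℝ) ≠ 0 := by positivity
  simp only [Finset.sum_const, Finset.card_univ, Fintype.card_fin, nsmul_eq_mul]
  calc _ = (n : ℝ)⁻¹ * Var[fun z => τ z ^ 2; gaussianReal 0 1] := by field_simp
    _ ≤ _ := by gcongr

theorem lip_bound {h : ℝ → ℝ} (hh : LipschitzWith 1 h) (x y : ℝ) : |h x - h y| ≤ |x - y| := by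
  simpa [Real.dist_eq] using hh.dist_le_mul x y

theorem lip_int {Ω : Type*} [MeasurableSpace Ω] {μ : Measure Ω} [IsProbabilityMeasure μ]
    {h : ℝ → ℝ} (hh : LipschitzWith 1 h) {f : Ω → ℝ} (hf : Integrable f μ) :
    Integrable (fun x => h (f x)) μ := by
  refine Integrable.mono' (hf.abs.add (integrable_const |h 0|))
    (hh.continuous.comp_aestronglyMeasurable hf.1) (ae_of_all _ fun x => ?_)
  have h1 := lip_bound hh (f x) 0
  rw [sub_zero] at h1
  have h2 := abs_sub_abs_le_abs_sub (h (f x)) (h 0)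
  simp only [Real.norm_eq_abs, Pi.add_apply]
  linarith

theorem core {τ : ℝ → ℝ} (hc : Continuous τ) (hL : MemLp τ 4 (gaussianReal 0 1))
    (n : ℕ) (hn : 1 ≤ n) {h : ℝ → ℝ} (hh : LipschitzWith 1 h) (v : ℝ) (hv : 0 ≤ v) :
    |(∫ x, h x ∂(Measure.map
        (fun ω : (Fin n → ℝ) × (Fin n → ℝ) =>
          (Real.sqrt n)⁻¹ * ∑ j, ω.1 j * τ (ω.2 j))
        ((Measure.pi fun _ : Fin n => gaussianReal 0 1).prod
          (Measure.pi fun _ : Fin n => gaussianReal 0 1))))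
      - ∫ x, h x ∂(gaussianReal 0 v.toNNReal)|
      ≤ ∫ y, |√(sampVar τ n y) - √v| ∂(Measure.pi fun _ : Fin n => gaussianReal 0 1) := by
  have hcont : Continuous (fun ω : (Fin n → ℝ) × (Fin n → ℝ) =>
          (Real.sqrt n)⁻¹ * ∑ j, ω.1 j * τ (ω.2 j)) := by fun_prop
  have hFint : Integrable (fun ω : (Fin n → ℝ) × (Fin n → ℝ) =>
          (Real.sqrt n)⁻¹ * ∑ j, ω.1 j * τ (ω.2 j))
        ((Measure.pi fun _ : Fin n => gaussianReal 0 1).prod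
          (Measure.pi fun _ : Fin n => gaussianReal 0 1)) := by
    refine Integrable.const_mul (integrable_finsetSum _ fun j _ => ?_) _
    have i1 : Integrable (fun x : Fin n → ℝ => x j)
        (Measure.pi fun _ : Fin n => gaussianReal 0 1) :=
      (measurePreserving_eval (fun _ : Fin n => gaussianReal 0 1) j).integrable_comp_of_integrable
        ((memLp_id_gaussianReal' 1 (by simp)).integrable le_rfl)
    have i2 : Integrable (fun x : Fin n → ℝ => τ (x j))
        (Measure.pi fun _ : Fin n => gaussianReal 0 1) :=
      (measurePreserving_eval (fun _ : Fin n => gaussianReal 0 1) j).integrable_comp_of_integrable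
        (hL.integrable (by norm_num))
    exact i1.mul_prod i2
  have hZ : Integrable (fun z : ℝ => z) (gaussianReal 0 1) :=
    (memLp_id_gaussianReal' 1 (by simp)).integrable le_rfl
  have inner : ∀ y : Fin n → ℝ, ∫ x : Fin n → ℝ, h ((Real.sqrt n)⁻¹ * ∑ j, x j * τ (y j))
      ∂(Measure.pi fun _ : Fin n => gaussianReal 0 1)
      = ∫ z, h (√(sampVar τ n y) * z) ∂(gaussianReal 0 1) := by
    intro y
    have l := lin_law (fun j => (Real.sqrt n)⁻¹ * τ (y j))
    have ec : ∑ j, ((Real.sqrt n)⁻¹ * τ (y j)) ^ 2 = sampVar τ n y := by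
      simp_rw [mul_pow, sampVar, Finset.mul_sum, inv_pow, Real.sq_sqrt (Nat.cast_nonneg n)]
    rw [ec] at l
    have e := congrArg (fun m => ∫ x, h x ∂m) l
    have hmeas : Measurable (fun x : Fin n → ℝ => ∑ j, x j * ((Real.sqrt n)⁻¹ * τ (y j))) := by
      fun_prop
    rw [integral_map hmeas.aemeasurable hh.continuous.aestronglyMeasurable,
      integral_map (by fun_prop) hh.continuous.aestronglyMeasurable] at e
    rw [← e]
    congr 1; ext x; congr 1
    rw [Finset.mul_sum]
    exact Finset.sum_congr rfl fun j _ => by ring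
  have hhF := lip_int hh hFint
  rw [integral_map hcont.aemeasurable hh.continuous.aestronglyMeasurable,
    integral_prod_symm _ hhF, gauss_scale v hv,
    integral_map (by fun_prop) hh.continuous.aestronglyMeasurable]
  have hI : Integrable (fun y => ∫ z, h (√(sampVar τ n y) * z) ∂(gaussianReal 0 1))
      (Measure.pi fun _ : Fin n => gaussianReal 0 1) := by
    have := hhF.integral_prod_right
    simpa only [inner] using this
  simp only [inner]
  have hconst : ∫ z, h (√v * z) ∂(gaussianReal 0 1)
      = ∫ y : Fin n → ℝ, (∫ z, h (√v * z) ∂(gaussianReal 0 1))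
        ∂(Measure.pi fun _ : Fin n => gaussianReal 0 1) := by simp
  rw [hconst, ← integral_sub hI (integrable_const _)]
  refine (abs_integral_le_integral_abs).trans ?_
  have hcv : Continuous (sampVar τ n) := by unfold sampVar; fun_prop
  have hSint : Integrable (fun y => √(sampVar τ n y) - √v)
      (Measure.pi fun _ : Fin n => gaussianReal 0 1) := by
    refine Integrable.mono' ((((memLp_condVar hL n).integrable one_le_two).abs.add
      (integrable_const (1 + √v)))) (by fun_prop) (ae_of_all _ fun y => ?_)
    have h0 : 0 ≤ sampVar τ n y := by unfold sampVar; positivity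
    have := abs_sub (√(sampVar τ n y)) (√v)
    rw [abs_of_nonneg (Real.sqrt_nonneg _), abs_of_nonneg (Real.sqrt_nonneg _)] at this
    simp only [Real.norm_eq_abs, Pi.add_apply, abs_of_nonneg h0]
    nlinarith [Real.sq_sqrt h0, sq_nonneg (√(sampVar τ n y) - 1), Real.sqrt_nonneg (sampVar τ n y)]
  refine integral_mono (hI.sub (integrable_const _)).abs hSint.abs fun y => ?_
  change |_ - _| ≤ |_|
  rw [← integral_sub (lip_int hh (hZ.const_mul _)) (lip_int hh (hZ.const_mul _))]
  refine (abs_integral_le_integral_abs).trans ?_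
  calc _ ≤ ∫ z, |√(sampVar τ n y) - √v| * |z| ∂(gaussianReal 0 1) := by
        refine integral_mono ((lip_int hh (hZ.const_mul _)).sub
          (lip_int hh (hZ.const_mul _))).abs (hZ.abs.const_mul _) fun z => ?_
        refine (lip_bound hh _ _).trans ?_
        rw [← sub_mul, abs_mul]
    _ = |√(sampVar τ n y) - √v| * ∫ z, |z| ∂(gaussianReal 0 1) := integral_const_mul _ _
    _ ≤ _ := mul_le_of_le_one_right (abs_nonneg _) abs_moment

theorem final_est {τ : ℝ → ℝ} (hc : Continuous τ) (hL : MemLp τ 4 (gaussianReal 0 1))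
    (n : ℕ) (hn : 1 ≤ n) (v : ℝ) (hv : v = ∫ z, τ z ^ 2 ∂(gaussianReal 0 1)) :
    ∫ y, |√(sampVar τ n y) - √v| ∂(Measure.pi fun _ : Fin n => gaussianReal 0 1)
      ≤ (√n)⁻¹ * √(1 / v) * √(∫ z, τ z ^ 4 ∂(gaussianReal 0 1)) := by
  have hv0 : 0 ≤ v := by rw [hv]; positivity
  have hcv : Continuous (sampVar τ n) := by unfold sampVar; fun_prop
  have h0 : ∀ y, 0 ≤ sampVar τ n y := fun y => by unfold sampVar; positivity
  have hm := memLp_condVar hL n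
  rcases hv0.eq_or_lt with hz | hpos
  · rw [← hz]
    simp only [Real.sqrt_zero, sub_zero, div_zero, mul_zero, zero_mul]
    have hsq : MemLp (fun y => √(sampVar τ n y)) 2
        (Measure.pi fun _ : Fin n => gaussianReal 0 1) := by
      rw [memLp_two_iff_integrable_sq (by fun_prop)]
      simp only [Real.sq_sqrt (h0 _)]
      exact hm.integrable one_le_two
    have := int_abs_sq _ _ hsq
    simp only [Real.sq_sqrt (h0 _)] at this
    rw [mean_condVar hL n hn, ← hv, ← hz] at this
    nlinarith
  · have hmv : MemLp (fun y => sampVar τ n y - v) 2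
      (Measure.pi fun _ : Fin n => gaussianReal 0 1) := hm.sub (memLp_const v)
    have hsv : 0 < √v := Real.sqrt_pos.2 hpos
    have hpt : ∀ y, |√(sampVar τ n y) - √v| ≤ (√v)⁻¹ * |sampVar τ n y - v| := by
      intro y
      have : sampVar τ n y - v = (√(sampVar τ n y) - √v) * (√(sampVar τ n y) + √v) := by
        nlinarith [Real.sq_sqrt (h0 y), Real.sq_sqrt hv0]
      rw [this, abs_mul, abs_of_nonneg (a := √(sampVar τ n y) + √v) (by positivity),
        inv_mul_eq_div, le_div_iff₀ hsv]
      gcongr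
      linarith [Real.sqrt_nonneg (sampVar τ n y)]
    have hi := (hmv.integrable one_le_two).abs.const_mul (√v)⁻¹
    have hb : ∫ y, |sampVar τ n y - v| ∂(Measure.pi fun _ : Fin n => gaussianReal 0 1)
        ≤ (√n)⁻¹ * √(∫ z, τ z ^ 4 ∂(gaussianReal 0 1)) := by
      rw [← Real.sqrt_inv, ← Real.sqrt_mul (by positivity)]
      apply Real.le_sqrt_of_sq_le
      refine (int_abs_sq _ _ hmv).trans ?_
      rw [hv]
      exact var_condVar hL n hn
    calc _ ≤ ∫ y, (√v)⁻¹ * |sampVar τ n y - v| ∂(Measure.pi fun _ : Fin n => gaussianReal 0 1) :=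
          integral_mono_of_nonneg (ae_of_all _ fun y => abs_nonneg _) hi (ae_of_all _ hpt)
      _ = (√v)⁻¹ * ∫ y, |sampVar τ n y - v| ∂(Measure.pi fun _ : Fin n => gaussianReal 0 1) :=
          integral_const_mul _ _
      _ ≤ (√v)⁻¹ * ((√n)⁻¹ * √(∫ z, τ z ^ 4 ∂(gaussianReal 0 1))) := by gcongr
      _ = _ := by rw [one_div, Real.sqrt_inv]; ring

end main

theorem shallow_nn_wasserstein_bound
    (τ : ℝ → ℝ) (a b γ : ℝ) (ha : 0 ≤ a) (hb : 0 ≤ b) (hγ : 0 ≤ γ)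
    (hτ : ContDiff ℝ 2 τ)
    (hτ0 : ∀ x : ℝ, |τ x| ≤ a + b * |x| ^ γ)
    (hτ1 : ∀ x : ℝ, |deriv τ x| ≤ a + b * |x| ^ γ)
    (hτ2 : ∀ x : ℝ, |deriv (deriv τ) x| ≤ a + b * |x| ^ γ)
    (n : ℕ) (hn : 1 ≤ n) :
    dW1
      (Measure.map
        (fun ω : (Fin n → ℝ) × (Fin n → ℝ) =>
          (Real.sqrt n)⁻¹ * ∑ j, ω.1 j * τ (ω.2 j))
        ((Measure.pi fun _ : Fin n => gaussianReal 0 1).prod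
          (Measure.pi fun _ : Fin n => gaussianReal 0 1)))
      (gaussianReal 0 (∫ z, (τ z) ^ 2 ∂gaussianReal 0 1).toNNReal)
      ≤ (Real.sqrt n)⁻¹
        * Real.sqrt (8 / ((∫ z, (τ z) ^ 2 ∂gaussianReal 0 1) * π))
        * Real.sqrt (3 * (1 + Real.sqrt 2))
        * ((∫ z, (a + b * |z| ^ γ) ^ 4 ∂gaussianReal 0 1) ^ ((1:ℝ)/4)) ^ 2 := by

  have hc : Continuous τ := hτ.continuous
  have hG := memLp_growth a b γ hγ
  have hL : MemLp τ 4 (gaussianReal 0 1) := by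
    refine hG.mono hc.aestronglyMeasurable (ae_of_all _ fun z => ?_)
    rw [Real.norm_eq_abs, Real.norm_eq_abs]
    exact (hτ0 z).trans (le_abs_self _)
  set v := ∫ z, (τ z) ^ 2 ∂gaussianReal 0 1 with hv
  have hv0 : 0 ≤ v := by rw [hv]; positivity
  set M := ∫ z, (a + b * |z| ^ γ) ^ 4 ∂gaussianReal 0 1 with hM
  have hM0 : 0 ≤ M := by rw [hM]; positivity
  have hM4 : ∫ z, τ z ^ 4 ∂gaussianReal 0 1 ≤ M := by
    refine integral_mono_of_nonneg (ae_of_all _ fun z => by positivity) ?_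
      (ae_of_all _ fun z => ?_)
    · have := hG.integrable_norm_pow (p := 4) (by norm_num)
      refine this.congr (ae_of_all _ fun z => ?_)
      simp only [Real.norm_eq_abs]
      exact Even.pow_abs (by decide) _
    · change τ z ^ 4 ≤ (a + b * |z| ^ γ) ^ 4
      rw [← Even.pow_abs (by decide : Even 4) (τ z)]
      exact pow_le_pow_left₀ (abs_nonneg _) (hτ0 z) 4
  have hMe : (M ^ ((1:ℝ)/4)) ^ 2 = √M := by
    rw [← Real.rpow_natCast, ← Real.rpow_mul hM0, Real.sqrt_eq_rpow]
    norm_num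
  have : Nonempty {h : ℝ → ℝ // LipschitzWith 1 h} := ⟨⟨id, LipschitzWith.id⟩⟩
  refine ciSup_le fun h => ?_
  refine (core hc hL n hn h.2 v hv0).trans ((final_est hc hL n hn v hv).trans ?_)
  rw [hMe, mul_assoc (√n)⁻¹, mul_assoc (√n)⁻¹, mul_assoc (√n)⁻¹]
  refine mul_le_mul_of_nonneg_left ?_ (by positivity)
  refine mul_le_mul ?_ (Real.sqrt_le_sqrt hM4) (by positivity) (by positivity)
  rw [← Real.sqrt_mul (by positivity)]
  apply Real.sqrt_le_sqrt
  have h1 : 1 ≤ 8 / π * (3 * (1 + √2)) := by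
    have : 1 ≤ 8 / π := by
      rw [le_div_iff₀ Real.pi_pos]; linarith [Real.pi_le_four]
    nlinarith [Real.sqrt_nonneg 2]
  calc 1 / v ≤ 1 / v * (8 / π * (3 * (1 + √2))) :=
        le_mul_of_one_le_right (by positivity) h1
    _ = _ := by
      rcases hv0.eq_or_lt with hz | hpos
      · simp [← hz]
      · have := Real.pi_pos
        field_simp
end

section
/- Let n ≥ 1 and let F = n^{-1/2} · Σ_{j=1}^n w_j τ(w_j^{(0)}), where w_1,…,w_n, w_1^{(0)},…,w_n^{(0)} are i.i.d. standard Gaussian random variables and τ ∈ C²(ℝ) satisfies |τ(x)| ≤ a + b|x|^γ, |τ'(x)| ≤ a + b|x|^γ and |τ''(x)| ≤ a + b|x|^γ for all x ∈ ℝ, for some constants a, b, γ ≥ 0. Let σ² = E[τ²(Z)] where Z ~ N(0,1), and let N ~ N(0, σ²). Then for every n ≥ 1, d_{KS}(F, N) ≤ (1/√n) · (2/σ²) · √(3(1+√2)) · ‖a + b|Z|^γ‖_{L⁴}², where ‖X‖_{L⁴} = (E[X⁴])^{1/4}. -/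
open MeasureTheory ProbabilityTheory Real

/-- The Kolmogorov–Smirnov distance between two distributions on `ℝ`:
`sup_z |P(X ≤ z) − P(Y ≤ z)|`. -/
noncomputable def dKS (μ ν : Measure ℝ) : ℝ :=
  ⨆ z : ℝ, |(μ (Set.Iic z)).toReal - (ν (Set.Iic z)).toReal|

lemma gauss_pdf_bound (u : ℝ) : gaussianPDFReal 0 1 u * |u| ≤ 1 := by
  have h1 : |u| ≤ Real.exp (u ^ 2 / 2) := by
    have := Real.add_one_le_exp (u ^ 2 / 2)
    nlinarith [sq_abs u, sq_nonneg (|u| - 1)]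
  have h2 : (√(2 * π))⁻¹ ≤ 1 := by
    apply inv_le_one_of_one_le₀
    rw [Real.one_le_sqrt]
    nlinarith [Real.pi_gt_three]
  have h3 : Real.exp (-(u ^ 2) / 2) * Real.exp (u ^ 2 / 2) = 1 := by
    rw [← Real.exp_add]; simp; ring
  rw [gaussianPDFReal]
  simp only [NNReal.coe_one, mul_one, sub_zero]
  have h4 : Real.exp (-(u ^ 2) / 2) * |u| ≤ 1 := by
    rw [← h3]; gcongr
  have h5 : 0 ≤ Real.exp (-(u ^ 2) / 2) * |u| := by positivity
  rw [mul_assoc]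
  have h6 : 0 ≤ (√(2 * π))⁻¹ := by positivity
  nlinarith

/-- measure of an interval away from zero -/
lemma gauss_interval (p q m : ℝ) (hpq : p ≤ q) (hm : 0 < m)
    (h : ∀ u ∈ Set.Ioc p q, m ≤ |u|) :
    |((gaussianReal 0 1) (Set.Iic p)).toReal - ((gaussianReal 0 1) (Set.Iic q)).toReal|
      ≤ (q - p) / m := by
  have e : Set.Iic q = Set.Iic p ∪ Set.Ioc p q := (Set.Iic_union_Ioc_eq_Iic hpq).symm
  have hd : Disjoint (Set.Iic p) (Set.Ioc p q) := Set.Iic_disjoint_Ioc le_rfl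
  have : ((gaussianReal 0 1) (Set.Iic q)).toReal
      = ((gaussianReal 0 1) (Set.Iic p)).toReal + ((gaussianReal 0 1) (Set.Ioc p q)).toReal := by
    rw [e, measure_union hd measurableSet_Ioc, ENNReal.toReal_add (by finiteness) (by finiteness)]
  rw [this, sub_add_cancel_left, abs_neg, abs_of_nonneg ENNReal.toReal_nonneg,
    gaussianReal_apply_eq_integral 0 one_ne_zero,
    ENNReal.toReal_ofReal (integral_nonneg fun _ => gaussianPDFReal_nonneg _ _ _)]
  have : ∫ x in Set.Ioc p q, gaussianPDFReal 0 1 x ≤ ∫ x in Set.Ioc p q, (1 / m : ℝ) := by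
    apply setIntegral_mono_on (integrable_gaussianPDFReal 0 1).integrableOn
    · exact integrableOn_const (by simp)
    · exact measurableSet_Ioc
    · intro u hu
      rw [le_div_iff₀ hm]
      have := gaussianPDFReal_nonneg 0 1 u
      calc _ ≤ gaussianPDFReal 0 1 u * |u| := by gcongr; exact h u hu
        _ ≤ 1 := gauss_pdf_bound u
  refine this.trans (le_of_eq ?_)
  simp [hpq]
  field_simp

lemma gauss_scale_s2 (s z : ℝ) (hs : 0 < s) :
    (gaussianReal 0 (s ^ 2).toNNReal) (Set.Iic z) = (gaussianReal 0 1) (Set.Iic (z / s)) := by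
  have := gaussianReal_map_const_mul (μ := 0) (v := 1) s
  have h2 : (NNReal.mk (s ^ 2) (sq_nonneg s) * 1) = (s ^ 2).toNNReal := by
    ext; simp [sq_nonneg]
  rw [h2, mul_zero] at this
  rw [← this, Measure.map_apply (by fun_prop) measurableSet_Iic]
  congr 1
  ext x
  simp [le_div_iff₀ hs, mul_comm]

lemma gauss_two (s r z : ℝ) (hs : 0 < s) (hsr : s ≤ r) :
    |((gaussianReal 0 (s ^ 2).toNNReal) (Set.Iic z)).toReal
      - ((gaussianReal 0 (r ^ 2).toNNReal) (Set.Iic z)).toReal| ≤ (r - s) / s := by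
  have hr : 0 < r := hs.trans_le hsr
  rw [gauss_scale_s2 s z hs, gauss_scale_s2 r z hr]
  rcases lt_trichotomy z 0 with hz | hz | hz
  · have h := gauss_interval (z / s) (z / r) (- (z / r))
      (by rw [div_le_div_iff₀ hs hr]; nlinarith) (by rw [← neg_div]; exact div_pos (by linarith) hr)
      (fun u hu => (neg_le_neg hu.2).trans (neg_le_abs u))
    refine h.trans (le_of_eq ?_)
    have := hz.ne
    field_simp
    ring
  · subst hz
    simp
    exact div_nonneg (by linarith) hs.le
  · have h := gauss_interval (z / r) (z / s) ((z / r))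
      (by rw [div_le_div_iff₀ hr hs]; nlinarith) (div_pos hz hr)
      (fun u hu => hu.1.le.trans (le_abs_self u))
    rw [abs_sub_comm]
    refine h.trans (le_of_eq ?_)
    have := hz.ne'
    field_simp

lemma gauss_cmp (t v z : ℝ) (ht : 0 ≤ t) (hv : 0 < v) :
    |((gaussianReal 0 t.toNNReal) (Set.Iic z)).toReal
      - ((gaussianReal 0 v.toNNReal) (Set.Iic z)).toReal| ≤ 2 / v * |t - v| := by
  obtain ⟨r, hr, rfl⟩ : ∃ r : ℝ, 0 < r ∧ r ^ 2 = v := ⟨√v, by positivity, Real.sq_sqrt hv.le⟩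
  obtain ⟨s, hs, rfl⟩ : ∃ r : ℝ, 0 ≤ r ∧ r ^ 2 = t := ⟨√t, by positivity, Real.sq_sqrt ht⟩
  rw [div_mul_eq_mul_div]
  rcases le_total r s with h | h
  · rw [abs_sub_comm]
    refine (gauss_two r s z hr h).trans ?_
    rw [abs_of_nonneg (by nlinarith), div_le_div_iff₀ hr hv]
    have : 0 ≤ (s - r) * r * (r + 2 * s) := by
      have := sub_nonneg.2 h; positivity
    nlinarith
  · rw [abs_sub_comm (s ^ 2), abs_of_nonneg (a := r ^ 2 - s ^ 2) (by nlinarith)]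
    by_cases h2 : r ≤ 2 * s
    · have hs' : 0 < s := by linarith
      refine (gauss_two s r z hs' h).trans ?_
      rw [div_le_div_iff₀ hs' hv]
      have : 0 ≤ (r - s) * (2 * (r + s) * s - r ^ 2) := by
        apply mul_nonneg (by linarith); nlinarith
      nlinarith
    · have h1 : |((gaussianReal 0 (s ^ 2).toNNReal) (Set.Iic z)).toReal
        - ((gaussianReal 0 (r ^ 2).toNNReal) (Set.Iic z)).toReal| ≤ 1 := by
        have a1 := measureReal_le_one (μ := gaussianReal 0 (s ^ 2).toNNReal) (s := Set.Iic z)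
        have a2 := measureReal_le_one (μ := gaussianReal 0 (r ^ 2).toNNReal) (s := Set.Iic z)
        rw [measureReal_def] at a1 a2
        rw [abs_le]
        constructor <;> linarith [ENNReal.toReal_nonneg (a := (gaussianReal 0 (s ^ 2).toNNReal) (Set.Iic z)), ENNReal.toReal_nonneg (a := (gaussianReal 0 (r ^ 2).toNNReal) (Set.Iic z))]
      refine h1.trans ?_
      rw [le_div_iff₀ hv]
      nlinarith

lemma gauss_lin {n : ℕ} (c : Fin n → ℝ) :
    (Measure.pi fun _ : Fin n => gaussianReal 0 1).map (fun w => ∑ j, w j * c j)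
      = gaussianReal 0 (∑ j, c j ^ 2).toNNReal := by
  have hm : Measurable (fun w : Fin n → ℝ => ∑ j, w j * c j) := by fun_prop
  have := Measure.isProbabilityMeasure_map (μ := Measure.pi fun _ : Fin n => gaussianReal 0 1) hm.aemeasurable
  apply Measure.ext_of_charFun
  ext t
  rw [charFun_gaussianReal, charFun_apply_real, integral_map hm.aemeasurable (by fun_prop)]
  have h1 : ∀ w : Fin n → ℝ, Complex.exp (t * ((∑ j, w j * c j : ℝ) : ℂ) * Complex.I)
      = ∏ j, Complex.exp (((t * c j : ℝ) : ℂ) * (w j : ℂ) * Complex.I) := by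
    intro w
    rw [← Complex.exp_sum]
    congr 1
    push_cast
    rw [Finset.mul_sum, Finset.sum_mul]
    exact Finset.sum_congr rfl fun j _ => by ring
  simp_rw [h1]
  rw [integral_fintype_prod_eq_prod (fun j (x : ℝ) => Complex.exp (((t * c j : ℝ) : ℂ) * (x : ℂ) * Complex.I))]
  simp_rw [← charFun_apply_real, charFun_gaussianReal]
  rw [← Complex.exp_sum]
  congr 1
  have h0 : 0 ≤ ∑ j, c j ^ 2 := Finset.sum_nonneg fun j _ => sq_nonneg _
  rw [show (((∑ j, c j ^ 2).toNNReal : NNReal) : ℂ) = ((∑ j, c j ^ 2 : ℝ) : ℂ) by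
    rw [← Complex.ofReal_inj.2 (Real.coe_toNNReal _ h0)]]
  push_cast
  simp only [mul_zero, zero_mul, zero_sub]
  rw [Finset.sum_mul, Finset.sum_div, ← Finset.sum_neg_distrib]
  exact Finset.sum_congr rfl fun j _ => by ring

lemma envelope_memLp (a b γ : ℝ) (ha : 0 ≤ a) (hb : 0 ≤ b) (hγ : 0 ≤ γ) :
    MemLp (fun z : ℝ => a + b * |z| ^ γ) 4 (gaussianReal 0 1) := by
  obtain ⟨k, hk⟩ := exists_nat_ge γ
  have h1 : MemLp (fun z : ℝ => z ^ k) 4 (gaussianReal 0 1) := by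
    have h := (memLp_id_gaussianReal' (μ := 0) (v := 1) ((k * 4 : ℕ) : ENNReal) (ENNReal.natCast_ne_top _)).integrable_norm_pow'
    have h4 := (integrable_norm_rpow_iff (μ := gaussianReal 0 1) (f := fun z : ℝ => z ^ k) (p := 4) (by fun_prop) (by simp) (by simp)).1
    apply h4
    refine h.congr (ae_of_all _ fun x => ?_)
    simp [pow_mul]
  have h2 : MemLp (fun z : ℝ => a + b * (1 + |z ^ k|)) 4 (gaussianReal 0 1) :=
    (memLp_const a).add (((memLp_const (1:ℝ)).add h1.abs).const_mul b)
  refine h2.mono (by fun_prop) (ae_of_all _ fun x => ?_)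
  have h3 : |x| ^ γ ≤ 1 + |x ^ k| := by
    rw [abs_pow]
    rcases le_total |x| 1 with h | h
    · have := Real.rpow_le_one (abs_nonneg x) h hγ
      have : 0 ≤ |x| ^ k := by positivity
      linarith
    · have := Real.rpow_le_rpow_of_exponent_le h hk
      rw [Real.rpow_natCast] at this
      linarith
  rw [Real.norm_of_nonneg (by positivity), Real.norm_of_nonneg (by positivity)]
  gcongr

lemma S_moment (τ : ℝ → ℝ) (a b γ : ℝ) (ha : 0 ≤ a) (hb : 0 ≤ b) (hγ : 0 ≤ γ)
    (hc : Continuous τ) (hτ0 : ∀ x : ℝ, |τ x| ≤ a + b * |x| ^ γ) (n : ℕ) (hn : 1 ≤ n) :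
    let P := Measure.pi fun _ : Fin n => gaussianReal 0 1
    let S := fun w : Fin n → ℝ => ∑ j, ((√n)⁻¹ * τ (w j)) ^ 2
    MemLp S 2 P ∧ ∫ w, S w ∂P = ∫ z, (τ z) ^ 2 ∂gaussianReal 0 1 ∧
      ∫ w, |S w - ∫ z, (τ z) ^ 2 ∂gaussianReal 0 1| ∂P
        ≤ (√n)⁻¹ * √(∫ z, (a + b * |z| ^ γ) ^ 4 ∂gaussianReal 0 1) := by
  intro P S
  have hn0 : (0:ℝ) < n := by exact_mod_cast hn
  have hsq : ((√n)⁻¹) ^ 2 = (n:ℝ)⁻¹ := by rw [inv_pow, Real.sq_sqrt hn0.le]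
  have henv := envelope_memLp a b γ ha hb hγ
  have hτL : MemLp τ 4 (gaussianReal 0 1) := by
    refine henv.mono hc.aestronglyMeasurable (ae_of_all _ fun x => ?_)
    rw [Real.norm_eq_abs, Real.norm_eq_abs]
    exact (hτ0 x).trans (le_abs_self _)
  have e4 : Integrable (fun z : ℝ => (a + b * |z| ^ γ) ^ 4) (gaussianReal 0 1) := by
    have := henv.integrable_norm_pow (p := 4) (by norm_num)
    refine this.congr (ae_of_all _ fun x => ?_)
    have : 0 ≤ a + b * |x| ^ γ := by positivity
    simp only [Real.norm_of_nonneg this]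
  have t4 : Integrable (fun z : ℝ => τ z ^ 4) (gaussianReal 0 1) := by
    have := hτL.integrable_norm_pow (p := 4) (by norm_num)
    refine this.congr (ae_of_all _ fun x => ?_)
    simp only [Real.norm_eq_abs]
    exact Even.pow_abs (by decide) _
  have hX : MemLp (fun x : ℝ => ((√n)⁻¹ * τ x) ^ 2) 2 (gaussianReal 0 1) := by
    rw [memLp_two_iff_integrable_sq (by fun_prop)]
    refine (t4.const_mul ((√n)⁻¹ ^ 4)).congr (ae_of_all _ fun x => ?_)
    simp only; ring
  have hXi : ∀ i : Fin n, MemLp (fun w : Fin n → ℝ => ((√n)⁻¹ * τ (w i)) ^ 2) 2 P := fun i =>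
    hX.comp_measurePreserving (measurePreserving_eval (fun _ : Fin n => gaussianReal 0 1) i)
  have hS : MemLp S 2 P := memLp_finset_sum _ fun i _ => hXi i
  have hmean : ∫ w, S w ∂P = ∫ z, (τ z) ^ 2 ∂gaussianReal 0 1 := by
    simp only [S]
    rw [integral_finset_sum _ fun i _ => (hXi i).integrable (by norm_num)]
    have : ∀ i : Fin n, ∫ w, ((√n)⁻¹ * τ (w i)) ^ 2 ∂P
        = (n:ℝ)⁻¹ * ∫ z, (τ z) ^ 2 ∂gaussianReal 0 1 := by
      intro i
      have h := integral_comp_eval (μ := fun _ : Fin n => gaussianReal 0 1) (i := i)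
        (f := fun x : ℝ => ((√n)⁻¹ * τ x) ^ 2) (by fun_prop)
      rw [h, ← integral_const_mul]
      simp_rw [mul_pow, hsq]
    simp_rw [this]
    simp
    field_simp
  refine ⟨hS, hmean, ?_⟩
  have hvar : Var[S; P] ≤ (n:ℝ)⁻¹ * ∫ z, (a + b * |z| ^ γ) ^ 4 ∂gaussianReal 0 1 := by
    have h := variance_sum_pi (μ := fun _ : Fin n => gaussianReal 0 1)
      (X := fun _ (x : ℝ) => ((√n)⁻¹ * τ x) ^ 2) (fun _ => hX)
    have hSe : S = ∑ i : Fin n, fun w : Fin n → ℝ => ((√n)⁻¹ * τ (w i)) ^ 2 := by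
      ext w; simp [S]
    rw [hSe, h]
    have h1 : Var[fun x : ℝ => ((√n)⁻¹ * τ x) ^ 2; gaussianReal 0 1]
        ≤ ((n:ℝ)⁻¹) ^ 2 * ∫ z, (a + b * |z| ^ γ) ^ 4 ∂gaussianReal 0 1 := by
      refine (variance_le_expectation_sq (by fun_prop)).trans ?_
      rw [← integral_const_mul]
      apply integral_mono
      · exact hX.integrable_sq
      · exact e4.const_mul _
      · intro x
        simp only [Pi.pow_apply]
        rw [← hsq]
        have h5 : τ x ^ 4 ≤ (a + b * |x| ^ γ) ^ 4 := by
          rw [← Even.pow_abs (by decide) (τ x)]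
          gcongr
          exact hτ0 x
        calc _ = ((√n)⁻¹ ^ 2) ^ 2 * τ x ^ 4 := by ring
          _ ≤ _ := by gcongr
    rw [Finset.sum_const, Finset.card_univ, Fintype.card_fin, nsmul_eq_mul]
    calc _ ≤ (n:ℝ) * (((n:ℝ)⁻¹) ^ 2 * ∫ z, (a + b * |z| ^ γ) ^ 4 ∂gaussianReal 0 1) := by gcongr
      _ = _ := by field_simp
  rw [← hmean]
  have hD : MemLp (fun w => |S w - ∫ w, S w ∂P|) 2 P := (hS.sub (memLp_const _)).abs
  have hjensen := variance_nonneg (fun w => |S w - ∫ w, S w ∂P|) P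
  rw [variance_eq_sub hD] at hjensen
  rw [variance_eq_integral hS.aestronglyMeasurable.aemeasurable] at hvar
  simp only [Pi.pow_apply, sq_abs] at hjensen
  rw [← Real.sqrt_inv, ← Real.sqrt_mul (by positivity)]
  apply Real.le_sqrt_of_sq_le
  linarith

lemma law_eq (τ : ℝ → ℝ) (hc : Continuous τ) (n : ℕ) (z : ℝ) :
    ((Measure.map
        (fun ω : (Fin n → ℝ) × (Fin n → ℝ) =>
          (Real.sqrt n)⁻¹ * ∑ j, ω.1 j * τ (ω.2 j))
        ((Measure.pi fun _ : Fin n => gaussianReal 0 1).prod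
          (Measure.pi fun _ : Fin n => gaussianReal 0 1))) (Set.Iic z)).toReal
    = ∫ w, ((gaussianReal 0 (∑ j, ((√n)⁻¹ * τ (w j)) ^ 2).toNNReal) (Set.Iic z)).toReal
        ∂(Measure.pi fun _ : Fin n => gaussianReal 0 1) := by
  have hm : Measurable (fun ω : (Fin n → ℝ) × (Fin n → ℝ) =>
          (Real.sqrt n)⁻¹ * ∑ j, ω.1 j * τ (ω.2 j)) := by
    have := hc.measurable
    fun_prop
  have hs := hm (measurableSet_Iic (a := z))
  have hmm := measurable_measure_prodMk_right
    (μ := Measure.pi fun _ : Fin n => gaussianReal 0 1) hs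
  have key : ∀ w : Fin n → ℝ, (Measure.pi fun _ : Fin n => gaussianReal 0 1)
      ((fun x => (x, w)) ⁻¹' ((fun ω : (Fin n → ℝ) × (Fin n → ℝ) =>
          (Real.sqrt n)⁻¹ * ∑ j, ω.1 j * τ (ω.2 j)) ⁻¹' (Set.Iic z)))
      = (gaussianReal 0 (∑ j, ((√n)⁻¹ * τ (w j)) ^ 2).toNNReal) (Set.Iic z) := by
    intro w
    rw [← gauss_lin, Measure.map_apply (by fun_prop) measurableSet_Iic]
    congr 1
    ext x
    simp only [Set.mem_preimage, Set.mem_Iic, Finset.mul_sum]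
    have : ∀ j, (√n)⁻¹ * (x j * τ (w j)) = x j * ((√n)⁻¹ * τ (w j)) := fun j => by ring
    simp_rw [this]
  rw [Measure.map_apply hm measurableSet_Iic, Measure.prod_apply_symm hs]
  simp_rw [key] at hmm ⊢
  rw [integral_toReal hmm.aemeasurable (ae_of_all _ fun _ => measure_lt_top _ _)]

lemma G_integrable (τ : ℝ → ℝ) (hc : Continuous τ) (n : ℕ) (z : ℝ) :
    Integrable (fun w : Fin n → ℝ =>
      ((gaussianReal 0 (∑ j, ((√n)⁻¹ * τ (w j)) ^ 2).toNNReal) (Set.Iic z)).toReal)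
        (Measure.pi fun _ : Fin n => gaussianReal 0 1) := by
  have hmeas : Measurable (fun w : Fin n → ℝ =>
      ((gaussianReal 0 (∑ j, ((√n)⁻¹ * τ (w j)) ^ 2).toNNReal) (Set.Iic z)).toReal) := by
    have h1 : Measurable (fun w : Fin n → ℝ =>
        gaussianReal 0 (∑ j, ((√n)⁻¹ * τ (w j)) ^ 2).toNNReal) := by
      have := hc.measurable
      have h2 : Measurable (fun w : Fin n → ℝ =>
        ((0:ℝ), (∑ j, ((√n)⁻¹ * τ (w j)) ^ 2).toNNReal)) := by fun_prop
      exact measurable_gaussianReal.comp h2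
    exact ((Measure.measurable_coe measurableSet_Iic).comp h1).ennreal_toReal
  refine Integrable.of_bound hmeas.aestronglyMeasurable 1 (ae_of_all _ fun w => ?_)
  rw [Real.norm_of_nonneg ENNReal.toReal_nonneg]
  exact measureReal_le_one

theorem shallow_nn_ks_bound
    (τ : ℝ → ℝ) (a b γ : ℝ) (ha : 0 ≤ a) (hb : 0 ≤ b) (hγ : 0 ≤ γ)
    (hτ : ContDiff ℝ 2 τ)
    (hτ0 : ∀ x : ℝ, |τ x| ≤ a + b * |x| ^ γ)
    (hτ1 : ∀ x : ℝ, |deriv τ x| ≤ a + b * |x| ^ γ)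
    (hτ2 : ∀ x : ℝ, |deriv (deriv τ) x| ≤ a + b * |x| ^ γ)
    (n : ℕ) (hn : 1 ≤ n) :
    dKS
      (Measure.map
        (fun ω : (Fin n → ℝ) × (Fin n → ℝ) =>
          (Real.sqrt n)⁻¹ * ∑ j, ω.1 j * τ (ω.2 j))
        ((Measure.pi fun _ : Fin n => gaussianReal 0 1).prod
          (Measure.pi fun _ : Fin n => gaussianReal 0 1)))
      (gaussianReal 0 (∫ z, (τ z) ^ 2 ∂gaussianReal 0 1).toNNReal)
      ≤ (Real.sqrt n)⁻¹
        * (2 / (∫ z, (τ z) ^ 2 ∂gaussianReal 0 1))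
        * Real.sqrt (3 * (1 + Real.sqrt 2))
        * ((∫ z, (a + b * |z| ^ γ) ^ 4 ∂gaussianReal 0 1) ^ ((1:ℝ)/4)) ^ 2 := by
  have hc : Continuous τ := hτ.continuous
  obtain ⟨hS, hmean, hdev⟩ := S_moment τ a b γ ha hb hγ hc hτ0 n hn
  set P := Measure.pi fun _ : Fin n => gaussianReal 0 1 with hP
  set v := ∫ z, (τ z) ^ 2 ∂gaussianReal 0 1 with hv
  set M := ∫ z, (a + b * |z| ^ γ) ^ 4 ∂gaussianReal 0 1 with hM
  have hv0 : 0 ≤ v := integral_nonneg fun z => sq_nonneg _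
  have hM0 : 0 ≤ M := integral_nonneg fun z => by positivity
  have hMs : (M ^ ((1:ℝ)/4)) ^ 2 = √M := by
    rw [← Real.rpow_natCast, ← Real.rpow_mul hM0, Real.sqrt_eq_rpow]
    norm_num
  have hS0 : ∀ w : Fin n → ℝ, 0 ≤ ∑ j, ((√n)⁻¹ * τ (w j)) ^ 2 :=
    fun w => Finset.sum_nonneg fun j _ => sq_nonneg _
  rw [hMs]
  unfold dKS
  apply ciSup_le
  intro z
  rw [law_eq τ hc n z, ← hP]
  have hG := G_integrable τ hc n z
  rw [← hP] at hG
  have hcst : ((gaussianReal 0 v.toNNReal) (Set.Iic z)).toReal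
      = ∫ w : Fin n → ℝ, ((gaussianReal 0 v.toNNReal) (Set.Iic z)).toReal ∂P := by simp
  rw [hcst, ← integral_sub hG (integrable_const _)]
  rcases hv0.eq_or_lt with h0 | hpos
  · have hz := (integral_eq_zero_iff_of_nonneg hS0 (hS.integrable (by norm_num))).1
      (hmean.trans h0.symm)
    rw [integral_eq_zero_of_ae]
    · simp only [abs_zero]; positivity
    · filter_upwards [hz] with w hw
      simp only [Pi.zero_apply] at hw
      simp only [hw, ← h0, sub_self, Pi.zero_apply]
  · have hD : Integrable (fun w : Fin n → ℝ => |∑ j, ((√n)⁻¹ * τ (w j)) ^ 2 - v|) P :=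
      ((hS.integrable (by norm_num)).sub (integrable_const _)).abs
    have h3 : 1 ≤ √(3 * (1 + √2)) := by
      rw [Real.one_le_sqrt]
      linarith [Real.sqrt_nonneg 2]
    calc _ ≤ ∫ w, |((gaussianReal 0 (∑ j, ((√n)⁻¹ * τ (w j)) ^ 2).toNNReal) (Set.Iic z)).toReal
            - ((gaussianReal 0 v.toNNReal) (Set.Iic z)).toReal| ∂P := abs_integral_le_integral_abs
      _ ≤ ∫ w, 2 / v * |∑ j, ((√n)⁻¹ * τ (w j)) ^ 2 - v| ∂P := by
          apply integral_mono (hG.sub (integrable_const _)).abs (hD.const_mul _)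
          intro w
          exact gauss_cmp _ v z (hS0 w) hpos
      _ = 2 / v * ∫ w, |∑ j, ((√n)⁻¹ * τ (w j)) ^ 2 - v| ∂P := integral_const_mul _ _
      _ ≤ 2 / v * ((√n)⁻¹ * √M) := by gcongr
      _ = (√n)⁻¹ * (2 / v) * 1 * √M := by ring
      _ ≤ _ := by gcongr
end

section
/- Fix d ≥ 1, an input x ∈ ℝ^d, and σ_w, σ_b > 0. Let F = n^{-1/2} · σ_w · Σ_{j=1}^n w_j τ(σ_w⟨w_j^{(0)}, x⟩ + σ_b b_j^{(0)}) + σ_b b, where the w_j, the coordinates w_{j,i}^{(0)} of the vectors w_j^{(0)} ∈ ℝ^d, the b_j^{(0)}, and b are all i.i.d. standard Gaussian random variables, and τ ∈ C²(ℝ) satisfies |τ(x)| ≤ a + b|x|^γ, |τ'(x)| ≤ a + b|x|^γ and |τ''(x)| ≤ a + b|x|^γ for all x ∈ ℝ, for some constants a, b, γ ≥ 0. Set Γ = (σ_w²‖x‖² + σ_b²)^{1/2} and σ² = σ_w² · E[τ²(ΓZ)] + σ_b² with Z ~ N(0,1), and let N ~ N(0, σ²). Then for every n ≥ 1, d_{W1}(F,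 N) ≤ (1/√n) · √(8/(σ²π)) · σ_w² · √(Γ² + Γ⁴·(2 + √(3(1 + 2Γ² + 3Γ⁴)))) · ‖a + b|ΓZ|^γ‖_{L⁴}², where ‖X‖_{L⁴} = (E[X⁴])^{1/4}. -/
open MeasureTheory ProbabilityTheory Real

lemma gnn_pow_integrable (k : ℕ) (C : ℝ) :
    Integrable (fun z : ℝ => C * (1 + |z|) ^ k) (gaussianReal 0 1) := by
  apply Integrable.const_mul
  have h1 : MemLp (fun z : ℝ => 1 + |z|) (k : ℕ) (gaussianReal 0 1) := by
    have h := (memLp_id_gaussianReal (μ := 0) (v := 1) (k : NNReal)).norm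
    have h2 := (memLp_const (μ := gaussianReal 0 1) (p := (k : NNReal)) (1:ℝ)).add h
    simpa using! h2
  have := h1.integrable_norm_pow'
  refine this.congr (ae_of_all _ fun z => ?_)
  have : 0 ≤ 1 + |z| := by positivity
  simp [abs_of_nonneg this]

lemma gnn_integrable {f : ℝ → ℝ} (hf : Continuous f) (C : ℝ) (k : ℕ)
    (h : ∀ z, |f z| ≤ C * (1 + |z|) ^ k) : Integrable f (gaussianReal 0 1) :=
  (gnn_pow_integrable k C).mono' hf.aestronglyMeasurable (ae_of_all _ fun z => by simpa using h z)

lemma gnn_growth (a b γ Γ : ℝ) (ha : 0 ≤ a) (hb : 0 ≤ b) (hγ : 0 ≤ γ) (hΓ : 0 ≤ Γ) :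
    ∃ C : ℝ, ∃ k : ℕ, 0 ≤ C ∧ ∀ z : ℝ, a + b * |Γ * z| ^ γ ≤ C * (1 + |z|) ^ k := by
  obtain ⟨k, hk⟩ := exists_nat_ge γ
  refine ⟨a + b * Γ ^ γ, k, by positivity, fun z => ?_⟩
  have h1 : (1:ℝ) ≤ (1 + |z|) ^ k := one_le_pow₀ (by simp)
  have h2 : |z| ^ γ ≤ (1 + |z|) ^ k := by
    calc |z| ^ γ ≤ (1 + |z|) ^ γ := by gcongr; simp
      _ ≤ (1 + |z|) ^ (k:ℝ) := by
        apply Real.rpow_le_rpow_of_exponent_le _ hk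
        simp
      _ = _ := Real.rpow_natCast _ _
  rw [abs_mul, abs_of_nonneg hΓ, Real.mul_rpow hΓ (abs_nonneg _), add_mul, ← mul_assoc]
  gcongr
  exact le_mul_of_one_le_right ha h1

lemma gnn_pdf (z : ℝ) : gaussianPDFReal 0 1 z = (√(2 * π))⁻¹ * rexp (-z ^ 2 / 2) := by
  simp [gaussianPDFReal_def]

lemma gnn_pdf_deriv (z : ℝ) :
    HasDerivAt (gaussianPDFReal 0 1) (- z * gaussianPDFReal 0 1 z) z := by
  have : gaussianPDFReal 0 1 = fun z => (√(2 * π))⁻¹ * rexp (-z ^ 2 / 2) := funext gnn_pdf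
  rw [this]
  have h : HasDerivAt (fun z : ℝ => -z ^ 2 / 2) (-z) z := by
    have := ((hasDerivAt_pow 2 z).neg.div_const 2)
    convert! this using 1
    simp; ring
  convert! (h.exp.const_mul ((√(2 * π))⁻¹)) using 1
  ring

lemma gnn_integrable_iff (f : ℝ → ℝ) (hf : Integrable f (gaussianReal 0 1)) :
    Integrable (fun z => f z * gaussianPDFReal 0 1 z) := by
  rw [gaussianReal_of_var_ne_zero _ one_ne_zero,
    integrable_withDensity_iff (measurable_gaussianPDF 0 1)
      (ae_of_all _ fun _ => gaussianPDF_lt_top)] at hf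
  simpa [toReal_gaussianPDF] using hf

/-- Stein's identity. -/
lemma gnn_stein (g g' : ℝ → ℝ) (hg : ∀ z, HasDerivAt g (g' z) z)
    (h1 : Integrable g (gaussianReal 0 1)) (h2 : Integrable g' (gaussianReal 0 1))
    (h3 : Integrable (fun z => z * g z) (gaussianReal 0 1)) :
    ∫ z, z * g z ∂(gaussianReal 0 1) = ∫ z, g' z ∂(gaussianReal 0 1) := by
  have := integral_mul_deriv_eq_deriv_mul_of_integrable (u := g) (u' := g')
    (v := gaussianPDFReal 0 1) (v' := fun z => - z * gaussianPDFReal 0 1 z)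
    (fun z _ => hg z) (fun z _ => gnn_pdf_deriv z)
    (by
      refine (gnn_integrable_iff _ h3).neg.congr (ae_of_all _ fun z => ?_)
      simp; ring)
    (gnn_integrable_iff _ h2) (gnn_integrable_iff _ h1)
  rw [integral_gaussianReal_eq_integral_smul one_ne_zero,
    integral_gaussianReal_eq_integral_smul one_ne_zero]
  simp only [smul_eq_mul]
  rw [← neg_inj, ← integral_neg]
  calc _ = ∫ (x : ℝ), g x * (-x * gaussianPDFReal 0 1 x) := by
        congr 1; ext x; ring
    _ = _ := this
    _ = _ := by congr 2; ext x; ring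

/-- Pointwise Cauchy-Schwarz. -/
lemma gnn_cs (f f' g g' : ℝ → ℝ) (hf : ∀ z, HasDerivAt f (f' z) z)
    (hg : ∀ z, HasDerivAt g (g' z) z) (h : ∀ z, f' z ^ 2 ≤ g' z) (h0 : g 0 = 0) (z : ℝ) :
    (f z - f 0) ^ 2 ≤ z * g z := by
  have mono : ∀ l : ℝ, Monotone (fun t => l ^ 2 * t + g t - 2 * l * f t) := by
    intro l
    have hd : ∀ t, HasDerivAt (fun t => l ^ 2 * t + g t - 2 * l * f t)
        (l ^ 2 * 1 + g' t - 2 * l * f' t) t := fun t =>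
      (((hasDerivAt_id t).const_mul (l^2)).add (hg t)).sub ((hf t).const_mul (2 * l))
    apply monotone_of_deriv_nonneg (fun t => (hd t).differentiableAt)
    intro t
    rw [(hd t).deriv]
    nlinarith [h t, sq_nonneg (l - f' t)]
  rcases lt_trichotomy z 0 with hz | hz | hz
  · have := mono ((f z - f 0) / z) hz.le
    simp only [h0] at this
    set D := f z - f 0 with hD
    have e : (D / z) * z = D := div_mul_cancel₀ _ hz.ne
    have : (D/z)^2 * z + g z - 2 * (D/z) * D ≤ 0 := by
      have : f z = D + f 0 := by rw [hD]; ring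
      simp only [this] at *
      nlinarith
    nlinarith
  · simp [hz]
  · have := mono ((f z - f 0) / z) hz.le
    simp only [h0] at this
    set D := f z - f 0 with hD
    have e : (D / z) * z = D := div_mul_cancel₀ _ hz.ne'
    have : 0 ≤ (D/z)^2 * z + g z - 2 * (D/z) * D := by
      have : f z = D + f 0 := by rw [hD]; ring
      simp only [this] at *
      nlinarith
    nlinarith

lemma gnn_abs : ∫ z, |z| ∂(gaussianReal 0 1) = √(2 / π) := by
  rw [integral_gaussianReal_eq_integral_smul one_ne_zero]
  simp only [smul_eq_mul, gnn_pdf]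
  have h := integral_comp_abs (f := fun x => (√(2 * π))⁻¹ * rexp (-x ^ 2 / 2) * x)
  simp only [sq_abs] at h
  rw [h]
  have h2 := integral_rpow_mul_exp_neg_mul_rpow (p := 2) (q := 1) (b := 1/2) (by norm_num)
    (by norm_num) (by norm_num)
  norm_num at h2
  have h3 : ∫ x in Set.Ioi (0:ℝ), (√(2 * π))⁻¹ * rexp (-x ^ 2 / 2) * x
      = (√(2 * π))⁻¹ * ∫ x in Set.Ioi (0:ℝ), x * rexp (-(1/2 * x ^ 2)) := by
    rw [← integral_const_mul]
    congr 1; ext x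
    rw [show -x ^ 2 / 2 = -(1/2 * x ^ 2) by ring]; ring
  rw [h3]
  norm_num
  rw [h2]
  have : 0 < √π := by positivity
  have h2 : √2 * √2 = 2 := Real.mul_self_sqrt (by norm_num)
  field_simp
  norm_num

lemma gnn_var (τ : ℝ → ℝ) (a b γ Γ : ℝ) (ha : 0 ≤ a) (hb : 0 ≤ b) (hγ : 0 ≤ γ) (hΓ : 0 ≤ Γ)
    (hτ : ContDiff ℝ 2 τ)
    (hτ0 : ∀ y : ℝ, |τ y| ≤ a + b * |y| ^ γ)
    (hτ1 : ∀ y : ℝ, |deriv τ y| ≤ a + b * |y| ^ γ) :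
    MemLp (fun z => τ (Γ * z) ^ 2) 2 (gaussianReal 0 1) ∧
    Var[fun z => τ (Γ * z) ^ 2; gaussianReal 0 1] ≤
      4 * Γ ^ 2 * ∫ z, (a + b * |Γ * z| ^ γ) ^ 4 ∂gaussianReal 0 1 := by
  obtain ⟨C, k, hC, hgr⟩ := gnn_growth a b γ Γ ha hb hγ hΓ
  have hτc : Continuous τ := hτ.continuous
  have hτd : ∀ y, HasDerivAt τ (deriv τ y) y := fun y =>
    (hτ.differentiable (by norm_num) y).hasDerivAt
  set G : ℝ → ℝ := fun z => a + b * |Γ * z| ^ γ with hG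
  have hG0 : ∀ z, 0 ≤ G z := fun z => by simp only [hG]; positivity
  have hGc : Continuous G := by
    have : Continuous fun z : ℝ => |Γ * z| ^ γ :=
      Continuous.rpow_const (by fun_prop) (fun _ => Or.inr hγ)
    fun_prop
  have hG4 : ∀ z, G z ^ 4 ≤ C ^ 4 * (1 + |z|) ^ (4 * k) := fun z => by
    calc G z ^ 4 ≤ (C * (1 + |z|) ^ k) ^ 4 := by
          exact pow_le_pow_left₀ (hG0 z) (hgr z) 4
      _ = _ := by rw [mul_pow]; ring
  set f : ℝ → ℝ := fun z => τ (Γ * z) ^ 2 with hf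
  have hfc : Continuous f := by fun_prop
  have hfG : ∀ z, f z ≤ G z ^ 2 := fun z => by
    simp only [hf]; rw [← sq_abs]
    have := hτ0 (Γ * z)
    gcongr
  have hf0 : ∀ z, 0 ≤ f z := fun z => sq_nonneg _
  have hmem : MemLp f 2 (gaussianReal 0 1) := by
    rw [memLp_two_iff_integrable_sq hfc.aestronglyMeasurable]
    refine gnn_integrable (by fun_prop) (C ^ 4) (4 * k) fun z => ?_
    rw [abs_of_nonneg (sq_nonneg _)]
    refine le_trans ?_ (hG4 z)
    calc f z ^ 2 ≤ (G z ^ 2) ^ 2 := by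
          exact pow_le_pow_left₀ (hf0 z) (hfG z) 2
      _ = _ := by ring
  refine ⟨hmem, ?_⟩
  set g' : ℝ → ℝ := fun z => 4 * Γ ^ 2 * G z ^ 4 with hg'
  have hg'c : Continuous g' := by fun_prop
  have hg'0 : ∀ z, 0 ≤ g' z := fun z => by simp only [hg']; have := hG0 z; positivity
  set g : ℝ → ℝ := fun z => ∫ t in (0:ℝ)..z, g' t with hg
  have hgd : ∀ z, HasDerivAt g (g' z) z := fun z =>
    hg'c.integral_hasStrictDerivAt 0 z |>.hasDerivAt
  have hgc : Continuous g := continuous_iff_continuousAt.2 fun z => (hgd z).continuousAt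
  have hfd : ∀ z, HasDerivAt f (2 * τ (Γ * z) * (deriv τ (Γ * z) * Γ)) z := fun z => by
    have h1 : HasDerivAt (fun z : ℝ => Γ * z) Γ z := by
      simpa using (hasDerivAt_id z).const_mul Γ
    have h2 := ((hτd (Γ * z)).comp z h1).pow 2
    simpa using! h2
  have hg'b : ∀ z, g' z ≤ 4 * Γ ^ 2 * C ^ 4 * (1 + |z|) ^ (4 * k) := fun z => by
    simp only [hg']; rw [mul_assoc (4 * Γ ^ 2)]
    exact mul_le_mul_of_nonneg_left (hG4 z) (by positivity)
  have hgb : ∀ z, |g z| ≤ g' z * |z| := fun z => by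
    have := intervalIntegral.norm_integral_le_of_norm_le_const (a := 0) (b := z) (f := g')
      (C := g' z) (fun t ht => by
        rw [Real.norm_of_nonneg (hg'0 t)]
        have htz : |t| ≤ |z| := by
          rcases Set.mem_uIoc.1 ht with h | h
          · rw [abs_of_nonneg h.1.le, abs_of_nonneg (h.1.le.trans h.2)]; exact h.2
          · rw [abs_of_nonpos h.2, abs_of_nonpos (h.1.le.trans h.2)]; linarith [h.1]
        have : |Γ * t| ≤ |Γ * z| := by rw [abs_mul, abs_mul]; gcongr
        simp only [hg', hG]
        gcongr)
    simpa using this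
  have hcs := gnn_cs f _ g g' hfd hgd (fun z => by
    have h1 := hτ0 (Γ * z)
    have h2 := hτ1 (Γ * z)
    calc (2 * τ (Γ * z) * (deriv τ (Γ * z) * Γ)) ^ 2
        = 4 * Γ ^ 2 * (|τ (Γ * z)| ^ 2 * |deriv τ (Γ * z)| ^ 2) := by
          rw [sq_abs, sq_abs]; ring
      _ ≤ 4 * Γ ^ 2 * (G z ^ 2 * G z ^ 2) := by
          simp only [hG]; gcongr
      _ = _ := by simp only [hg']; ring) (by simp [hg])
  set K := 4 * Γ ^ 2 * C ^ 4 with hK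
  have hK0 : 0 ≤ K := by positivity
  have i1 : Integrable g (gaussianReal 0 1) := by
    refine gnn_integrable hgc K (4 * k + 1) fun z => (hgb z).trans ?_
    rw [pow_succ, ← mul_assoc]
    have := hg'b z
    gcongr
    linarith
  have i2 : Integrable g' (gaussianReal 0 1) := by
    refine gnn_integrable hg'c K (4 * k) fun z => ?_
    rw [abs_of_nonneg (hg'0 z)]; exact hg'b z
  have i3 : Integrable (fun z => z * g z) (gaussianReal 0 1) := by
    refine gnn_integrable (by fun_prop) K (4 * k + 1 + 1) fun z => ?_
    rw [pow_succ, pow_succ, ← mul_assoc, ← mul_assoc, abs_mul, mul_comm]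
    have := hg'b z
    have h1 : |z| ≤ 1 + |z| := by linarith
    calc |g z| * |z| ≤ (g' z * |z|) * |z| := by gcongr; exact hgb z
      _ ≤ _ := by gcongr
  have hst := gnn_stein g g' hgd i1 i2 i3
  calc Var[f; gaussianReal 0 1] = Var[fun z => f z - f 0; gaussianReal 0 1] :=
        (variance_sub_const hfc.aestronglyMeasurable _).symm
    _ ≤ ∫ z, (f z - f 0) ^ 2 ∂gaussianReal 0 1 :=
        variance_le_expectation_sq (X := fun z => f z - f 0) (by fun_prop)
    _ ≤ ∫ z, z * g z ∂gaussianReal 0 1 := 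
        integral_mono_of_nonneg (ae_of_all _ fun z => sq_nonneg _) i3 (ae_of_all _ hcs)
    _ = _ := by rw [hst, hg', integral_const_mul]

lemma gnn_law {m : ℕ} (c : Fin m → ℝ) (s : ℝ) :
    Measure.map (fun p : (Fin m → ℝ) × ℝ => (∑ i, p.1 i * c i) + s * p.2)
      ((Measure.pi fun _ : Fin m => gaussianReal 0 1).prod (gaussianReal 0 1)) =
    Measure.map (fun z => √((∑ i, c i ^ 2) + s ^ 2) * z) (gaussianReal 0 1) := by
  have key : ∀ r : ℝ, ∫ z : ℝ, Complex.exp (r * z * Complex.I) ∂gaussianReal 0 1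
      = Complex.exp (-(r ^ 2 / 2)) := fun r => by
    have := charFun_gaussianReal (μ := 0) (v := 1) r
    rw [charFun_apply_real] at this
    rw [this]; simp
  apply Measure.ext_of_charFun
  ext t
  rw [charFun_apply_real, charFun_apply_real, integral_map (by fun_prop) (by fun_prop),
    integral_map (by fun_prop) (by fun_prop)]
  have hs : 0 ≤ (∑ i, c i ^ 2) + s ^ 2 := by positivity
  have e1 : ∀ z : ℝ, Complex.exp (t * ((√((∑ i, c i ^ 2) + s ^ 2) * z : ℝ) : ℂ) * Complex.I)
    = Complex.exp (((t * √((∑ i, c i ^ 2) + s ^ 2) : ℝ) : ℂ) * z * Complex.I) := fun z => by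
    push_cast; ring_nf
  have e2 : ∀ p : (Fin m → ℝ) × ℝ,
      Complex.exp (t * (((∑ i, p.1 i * c i) + s * p.2 : ℝ) : ℂ) * Complex.I)
    = (∏ i, Complex.exp (((t * c i : ℝ) : ℂ) * (p.1 i) * Complex.I)) *
      Complex.exp (((t * s : ℝ) : ℂ) * p.2 * Complex.I) := fun p => by
    rw [← Complex.exp_sum, ← Complex.exp_add]
    congr 1
    push_cast
    rw [← Finset.sum_mul, mul_add, add_mul, Finset.mul_sum]
    congr 1
    · congr 1; apply Finset.sum_congr rfl; intros; ring
    · ring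
  simp_rw [e1, e2]
  rw [integral_prod_mul (f := fun w : Fin m → ℝ =>
      (∏ i, Complex.exp (((t * c i : ℝ) : ℂ) * (w i) * Complex.I)))
    (g := fun z : ℝ => Complex.exp (((t * s : ℝ) : ℂ) * z * Complex.I)),
    integral_fintype_prod_eq_prod (f := fun i (z : ℝ) =>
      Complex.exp (((t * c i : ℝ) : ℂ) * z * Complex.I))]
  simp_rw [key]
  rw [← Complex.exp_sum, ← Complex.exp_add]
  congr 1
  rw [← Complex.ofReal_pow (t * √_), mul_pow t (√_), Real.sq_sqrt hs]
  push_cast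
  simp_rw [mul_pow]
  rw [Finset.sum_neg_distrib, ← Finset.sum_div, ← Finset.mul_sum]
  ring

lemma gnn_F_law (d n : ℕ) (x : Fin d → ℝ) (σw σb : ℝ) (τ : ℝ → ℝ) (hτ : Continuous τ)
    (Γ : ℝ) (hΓ : Γ = Real.sqrt (σw ^ 2 * (∑ i, (x i) ^ 2) + σb ^ 2)) (r : ℝ) :
    Measure.map
        (fun ω : (Fin n → ℝ) × (Fin n → (Fin d → ℝ)) × (Fin n → ℝ) × ℝ =>
          r * (∑ j, ω.1 j * τ (σw * (∑ i, ω.2.1 j i * x i) + σb * ω.2.2.1 j))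
            + σb * ω.2.2.2)
        ((Measure.pi fun _ : Fin n => gaussianReal 0 1).prod
          ((Measure.pi fun _ : Fin n => Measure.pi fun _ : Fin d => gaussianReal 0 1).prod
            ((Measure.pi fun _ : Fin n => gaussianReal 0 1).prod (gaussianReal 0 1)))) =
    Measure.map (fun p : ℝ × (Fin n → ℝ) =>
        √((∑ j, (r * τ (Γ * p.2 j)) ^ 2) + σb ^ 2) * p.1)
      ((gaussianReal 0 1).prod (Measure.pi fun _ : Fin n => gaussianReal 0 1)) := by
  set γ₁ := gaussianReal 0 1 with hγ₁
  set P1 := Measure.pi fun _ : Fin n => γ₁ with hP1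
  set P2 := Measure.pi fun _ : Fin n => Measure.pi fun _ : Fin d => γ₁ with hP2
  -- first-layer preactivations
  have u1 : MeasurePreserving (fun (q : (Fin n → (Fin d → ℝ)) × (Fin n → ℝ)) (j : Fin n) =>
      (∑ i, q.1 j i * (σw * x i)) + σb * q.2 j) (P2.prod P1)
      (Measure.pi fun _ : Fin n => γ₁.map (fun z => Γ * z)) := by
    have h1 := (measurePreserving_arrowProdEquivProdArrow (Fin d → ℝ) ℝ (Fin n)
      (fun _ => Measure.pi fun _ : Fin d => γ₁) (fun _ => γ₁)).symm
    have h2 : MeasurePreserving (fun (q : Fin n → (Fin d → ℝ) × ℝ) (j : Fin n) =>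
      (∑ i, (q j).1 i * (σw * x i)) + σb * (q j).2)
      (Measure.pi fun _ : Fin n => (Measure.pi fun _ : Fin d => γ₁).prod γ₁)
      (Measure.pi fun _ : Fin n => γ₁.map (fun z => Γ * z)) := by
      refine ⟨by fun_prop, ?_⟩
      have hl := gnn_law (fun i => σw * x i) σb
      have hs : √((∑ i, (σw * x i) ^ 2) + σb ^ 2) = Γ := by
        rw [hΓ, Finset.mul_sum]; simp_rw [mul_pow]
      rw [hs] at hl
      have hp : IsProbabilityMeasure (γ₁.map (fun z => Γ * z)) :=
        Measure.isProbabilityMeasure_map (by fun_prop)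
      have : ∀ i : Fin n, SigmaFinite (((Measure.pi fun _ : Fin d => γ₁).prod γ₁).map
         (fun p : (Fin d → ℝ) × ℝ => (∑ i, p.1 i * (σw * x i)) + σb * p.2)) := fun _ => by
        rw [hl]; infer_instance
      rw [Measure.pi_map_pi (f := fun (_ : Fin n) (p : (Fin d → ℝ) × ℝ) =>
        (∑ i, p.1 i * (σw * x i)) + σb * p.2) (fun _ => by fun_prop), hl]
    exact h2.comp h1
  have hp : IsProbabilityMeasure (γ₁.map (fun z => Γ * z)) :=
    Measure.isProbabilityMeasure_map (by fun_prop)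
  have u2 : MeasurePreserving (fun (q : Fin n → ℝ) (j : Fin n) => Γ * q j) P1
      (Measure.pi fun _ : Fin n => γ₁.map (fun z => Γ * z)) := by
    refine ⟨by fun_prop, ?_⟩
    rw [hP1, Measure.pi_map_pi (f := fun (_ : Fin n) (z : ℝ) => Γ * z) (fun _ => by fun_prop)]
  have e0 : MeasurePreserving (fun ω : (Fin n → ℝ) × (Fin n → (Fin d → ℝ)) × (Fin n → ℝ) × ℝ =>
      ((ω.1, ω.2.2.2), (ω.2.1, ω.2.2.1))) (P1.prod (P2.prod (P1.prod γ₁)))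
      ((P1.prod γ₁).prod (P2.prod P1)) := by
    have s1 : MeasurePreserving _ (P1.prod (P2.prod (P1.prod γ₁))) (P1.prod ((P2.prod P1).prod γ₁)) :=
      (MeasurePreserving.id P1).prod (measurePreserving_prodAssoc P2 P1 γ₁).symm
    have s2 : MeasurePreserving _ (P1.prod ((P2.prod P1).prod γ₁)) (P1.prod (γ₁.prod (P2.prod P1))) :=
      (MeasurePreserving.id P1).prod Measure.measurePreserving_swap
    have s3 := (measurePreserving_prodAssoc P1 γ₁ (P2.prod P1)).symm
    exact s3.comp (s2.comp s1)
  have e1 := (MeasurePreserving.id (P1.prod γ₁)).prod u1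
  have e2 := (MeasurePreserving.id (P1.prod γ₁)).prod u2
  set H : ((Fin n → ℝ) × ℝ) × (Fin n → ℝ) → ℝ := fun t =>
    r * (∑ j, t.1.1 j * τ (t.2 j)) + σb * t.1.2 with hH
  have hHm : Measurable H := by fun_prop
  have L : Measure.map
        (fun ω : (Fin n → ℝ) × (Fin n → (Fin d → ℝ)) × (Fin n → ℝ) × ℝ =>
          r * (∑ j, ω.1 j * τ (σw * (∑ i, ω.2.1 j i * x i) + σb * ω.2.2.1 j))
            + σb * ω.2.2.2) (P1.prod (P2.prod (P1.prod γ₁))) =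
      ((P1.prod γ₁).prod (Measure.pi fun _ : Fin n => γ₁.map (fun z => Γ * z))).map H := by
    rw [← (e1.comp e0).map_eq, Measure.map_map hHm (e1.comp e0).measurable]
    congr 1
    ext ω
    simp only [hH, Function.comp, Prod.map, id]
    simp_rw [Finset.mul_sum]
    congr 1
    apply Finset.sum_congr rfl; intro j _
    congr 4
    apply Finset.sum_congr rfl; intros; ring
  rw [L, ← e2.map_eq, Measure.map_map hHm e2.measurable]
  apply Measure.ext_of_lintegral
  intro f hf
  rw [lintegral_map hf (hHm.comp e2.measurable), lintegral_map hf (by fun_prop),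
    lintegral_prod_symm' (fun a => f ((H ∘ Prod.map id fun (q : Fin n → ℝ) j => Γ * q j) a))
      (hf.comp (hHm.comp e2.measurable)),
    lintegral_prod_symm' _ (by fun_prop)]
  congr 1
  ext z
  have hl := gnn_law (fun j => r * τ (Γ * z j)) σb
  have := congrArg (fun μ => ∫⁻ y, f y ∂μ) hl
  rw [lintegral_map hf (by fun_prop), lintegral_map hf (by fun_prop)] at this
  rw [← this]
  congr 1
  ext p
  simp only [hH, Function.comp, Prod.map, id]
  rw [Finset.mul_sum]
  congr 2
  apply Finset.sum_congr rfl; intros; ring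

/-- First absolute moment of the centred sum is controlled by the variance. -/
lemma gnn_L1 (n : ℕ) (f : ℝ → ℝ) (hf : MemLp f 2 (gaussianReal 0 1)) :
    MemLp (fun z : Fin n → ℝ => (∑ j, f (z j)) - n * ∫ y, f y ∂gaussianReal 0 1) 2
      (Measure.pi fun _ : Fin n => gaussianReal 0 1) ∧
    ∫ z : Fin n → ℝ, |(∑ j, f (z j)) - n * ∫ y, f y ∂gaussianReal 0 1|
      ∂(Measure.pi fun _ : Fin n => gaussianReal 0 1) ≤ √(n * Var[f; gaussianReal 0 1]) := by
  set P := Measure.pi fun _ : Fin n => gaussianReal 0 1 with hP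
  have hev : ∀ j : Fin n, MeasurePreserving (fun z : Fin n → ℝ => z j) P (gaussianReal 0 1) :=
    fun j => measurePreserving_eval _ j
  have hj : ∀ j : Fin n, MemLp (fun z : Fin n → ℝ => f (z j)) 2 P := fun j =>
    hf.comp_measurePreserving (hev j)
  have hsum : MemLp (fun z : Fin n → ℝ => ∑ j, f (z j)) 2 P :=
    memLp_finsetSum _ fun j _ => hj j
  have hY := hsum.sub (memLp_const (n * ∫ y, f y ∂gaussianReal 0 1))
  refine ⟨hY, ?_⟩
  set Y : (Fin n → ℝ) → ℝ := fun z => (∑ j, f (z j)) - n * ∫ y, f y ∂gaussianReal 0 1 with hYd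
  have hmean : ∫ z, ∑ j, f (z j) ∂P = n * ∫ y, f y ∂gaussianReal 0 1 := by
    rw [integral_finsetSum _ fun j _ => (hj j).integrable (by norm_num)]
    have : ∀ j : Fin n, ∫ z, f (z j) ∂P = ∫ y, f y ∂gaussianReal 0 1 := fun j => by
      rw [← (hev j).map_eq, integral_map (hev j).measurable.aemeasurable]
      rw [(hev j).map_eq]; exact hf.1
    simp [this]
  have hvar : Var[fun z : Fin n → ℝ => ∑ j, f (z j); P] = n * Var[f; gaussianReal 0 1] := by
    have := variance_sum_pi (μ := fun _ : Fin n => gaussianReal 0 1) (X := fun _ => f)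
      (fun _ => hf)
    rw [← hP] at this
    have e : (fun z : Fin n → ℝ => ∑ j, f (z j)) = ∑ j, fun z : Fin n → ℝ => f (z j) := by
      ext; simp
    rw [e, this]; simp
  have hsq : ∫ z, Y z ^ 2 ∂P = n * Var[f; gaussianReal 0 1] := by
    rw [← hvar, variance_eq_integral hsum.1.aemeasurable, hmean]
  apply Real.le_sqrt_of_sq_le
  rw [← hsq]
  have h1 := variance_eq_sub hY.norm
  have h2 := variance_nonneg (fun z => ‖Y z‖) P
  have h3 : ∫ z, (fun z => ‖Y z‖ ^ 2) z ∂P = ∫ z, Y z ^ 2 ∂P := by simp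
  have h4 : Var[fun z => ‖Y z‖; P] = ∫ z, (fun z => ‖Y z‖ ^ 2) z ∂P - (∫ z, ‖Y z‖ ∂P) ^ 2 := h1
  rw [h3] at h4
  simp only [Real.norm_eq_abs] at h4 h2
  linarith

theorem gaussian_nn_wasserstein_bound
    (d : ℕ) (hd : 1 ≤ d) (x : Fin d → ℝ) (σw σb : ℝ) (hσw : 0 < σw) (hσb : 0 < σb)
    (τ : ℝ → ℝ) (a b γ : ℝ) (ha : 0 ≤ a) (hb : 0 ≤ b) (hγ : 0 ≤ γ)
    (hτ : ContDiff ℝ 2 τ)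
    (hτ0 : ∀ y : ℝ, |τ y| ≤ a + b * |y| ^ γ)
    (hτ1 : ∀ y : ℝ, |deriv τ y| ≤ a + b * |y| ^ γ)
    (hτ2 : ∀ y : ℝ, |deriv (deriv τ) y| ≤ a + b * |y| ^ γ)
    (Γ : ℝ) (hΓ : Γ = Real.sqrt (σw ^ 2 * (∑ i, (x i) ^ 2) + σb ^ 2))
    (σ2 : ℝ) (hσ2 : σ2 = σw ^ 2 * (∫ z, (τ (Γ * z)) ^ 2 ∂gaussianReal 0 1) + σb ^ 2)
    (n : ℕ) (hn : 1 ≤ n) :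
    dW1
      (Measure.map
        (fun ω : (Fin n → ℝ) × (Fin n → (Fin d → ℝ)) × (Fin n → ℝ) × ℝ =>
          (Real.sqrt n)⁻¹ * σw *
              (∑ j, ω.1 j * τ (σw * (∑ i, ω.2.1 j i * x i) + σb * ω.2.2.1 j))
            + σb * ω.2.2.2)
        ((Measure.pi fun _ : Fin n => gaussianReal 0 1).prod
          ((Measure.pi fun _ : Fin n => Measure.pi fun _ : Fin d => gaussianReal 0 1).prod
            ((Measure.pi fun _ : Fin n => gaussianReal 0 1).prod (gaussianReal 0 1)))))
      (gaussianReal 0 σ2.toNNReal)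
      ≤ (Real.sqrt n)⁻¹
        * (Real.sqrt (8 / (σ2 * π)))
        * σw ^ 2
        * Real.sqrt (Γ ^ 2 + Γ ^ 4 * (2 + Real.sqrt (3 * (1 + 2 * Γ ^ 2 + 3 * Γ ^ 4))))
        * ((∫ z, (a + b * |Γ * z| ^ γ) ^ 4 ∂gaussianReal 0 1) ^ ((1:ℝ)/4)) ^ 2 := by
  have hσ2b : σb ^ 2 ≤ σ2 := by
    rw [hσ2]
    have : 0 ≤ ∫ z, (τ (Γ * z)) ^ 2 ∂gaussianReal 0 1 := integral_nonneg fun z => sq_nonneg _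
    have : 0 ≤ σw ^ 2 * ∫ z, (τ (Γ * z)) ^ 2 ∂gaussianReal 0 1 := by positivity
    linarith
  have hσ2p : 0 < σ2 := lt_of_lt_of_le (by positivity) hσ2b
  have hΓ0 : 0 ≤ Γ := by rw [hΓ]; positivity
  have hn0 : (0:ℝ) < n := by exact_mod_cast hn
  have hτc : Continuous τ := hτ.continuous
  obtain ⟨hfm, hV⟩ := gnn_var τ a b γ Γ ha hb hγ hΓ0 hτ hτ0 hτ1
  rw [gnn_F_law d n x σw σb τ hτc Γ hΓ]
  set γ₁ := gaussianReal 0 1 with hγ₁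
  set P := Measure.pi fun _ : Fin n => γ₁ with hP
  set f : ℝ → ℝ := fun z => τ (Γ * z) ^ 2 with hf
  obtain ⟨hYm, hYb⟩ := gnn_L1 n f hfm
  set Y : (Fin n → ℝ) → ℝ := fun z => (∑ j, f (z j)) - n * ∫ y, f y ∂gaussianReal 0 1 with hY
  set A : (Fin n → ℝ) → ℝ := fun z =>
    (∑ j, ((√n)⁻¹ * σw * τ (Γ * z j)) ^ 2) + σb ^ 2 with hA
  have hAc : Continuous A := by fun_prop
  have hAY : ∀ z, A z - σ2 = σw ^ 2 / n * Y z := fun z => by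
    have e : ∀ j, ((√n)⁻¹ * σw * τ (Γ * z j)) ^ 2 = σw ^ 2 / n * f (z j) := fun j => by
      simp only [hf]
      rw [mul_pow, mul_pow, inv_pow, Real.sq_sqrt hn0.le]
      field_simp
    simp only [hA, hY]
    simp_rw [e]
    rw [← Finset.mul_sum, hσ2]
    field_simp
    ring
  have hA0 : ∀ z, 0 ≤ A z := fun z => by simp only [hA]; positivity
  set s := √σ2 with hs
  have hs0 : 0 < s := by positivity
  have hs2 : s ^ 2 = σ2 := Real.sq_sqrt hσ2p.le
  have hD : ∀ z, |√(A z) - s| ≤ s⁻¹ * (σw ^ 2 / n * |Y z|) := fun z => by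
    have h1 : (√(A z) - s) * (√(A z) + s) = σw ^ 2 / n * Y z := by
      rw [← hAY z, ← hs2]
      nlinarith [Real.sq_sqrt (hA0 z)]
    have h2 : |√(A z) - s| * (√(A z) + s) = σw ^ 2 / n * |Y z| := by
      have h0 : 0 ≤ √(A z) + s := by positivity
      rw [← abs_of_nonneg h0, ← abs_mul, h1, abs_mul, abs_of_nonneg (by positivity : 0 ≤ σw ^ 2 / n)]
    rw [← h2, ← div_eq_inv_mul, le_div_iff₀ hs0]
    have : 0 ≤ √(A z) := by positivity
    gcongr
    linarith
  have hN : gaussianReal 0 σ2.toNNReal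
      = Measure.map (fun p : ℝ × (Fin n → ℝ) => s * p.1) (γ₁.prod P) := by
    have h1 : Measure.map (fun p : ℝ × (Fin n → ℝ) => s * p.1) (γ₁.prod P)
        = Measure.map (fun z => s * z) (Measure.map Prod.fst (γ₁.prod P)) := by
      rw [Measure.map_map (by fun_prop) (by fun_prop)]; rfl
    rw [h1, Measure.map_fst_prod, measure_univ, one_smul, hγ₁, gaussianReal_map_const_mul]
    congr 1
    · simp
    · rw [mul_one]; ext; simp [hs2, hσ2p.le]
  have iabs : Integrable (fun z : ℝ => |z|) γ₁ :=
    gnn_integrable (by fun_prop) 1 1 fun z => by simp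
  have iY : Integrable (fun z => |Y z|) P := (hYm.integrable (by norm_num)).abs
  have iD : Integrable (fun z => |√(A z) - s|) P := by
    refine ((iY.const_mul (σw ^ 2 / n)).const_mul s⁻¹).mono' (by fun_prop)
      (ae_of_all _ fun z => ?_)
    simpa using hD z
  have iDp : Integrable (fun p : ℝ × (Fin n → ℝ) => |p.1| * |√(A p.2) - s|) (γ₁.prod P) :=
    iabs.mul_prod iD
  have isp : Integrable (fun p : ℝ × (Fin n → ℝ) => |p.1| * s) (γ₁.prod P) :=
    iabs.mul_prod (integrable_const s)
  have hED : ∫ z, |√(A z) - s| ∂P ≤ s⁻¹ * (σw ^ 2 / n * √(n * Var[f; γ₁])) := by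
    calc ∫ z, |√(A z) - s| ∂P ≤ ∫ z, s⁻¹ * (σw ^ 2 / n * |Y z|) ∂P :=
          integral_mono iD ((iY.const_mul _).const_mul _) hD
      _ = s⁻¹ * (σw ^ 2 / n * ∫ z, |Y z| ∂P) := by
          rw [integral_const_mul, integral_const_mul]
      _ ≤ _ := by gcongr
  have main : ∀ h : ℝ → ℝ, LipschitzWith 1 h →
      |(∫ y, h y ∂Measure.map (fun p : ℝ × (Fin n → ℝ) => √(A p.2) * p.1) (γ₁.prod P))
        - ∫ y, h y ∂gaussianReal 0 σ2.toNNReal| ≤ √(2 / π) * ∫ z, |√(A z) - s| ∂P := by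
    intro h hh
    have hc := hh.continuous
    rw [hN, integral_map (by fun_prop) (by fun_prop), integral_map (by fun_prop) (by fun_prop)]
    have lip : ∀ u v, |h u - h v| ≤ |u - v| := fun u v => by
      simpa [Real.dist_eq] using hh.dist_le_mul u v
    have i2 : Integrable (fun p : ℝ × (Fin n → ℝ) => h (s * p.1)) (γ₁.prod P) := by
      refine ((integrable_const |h 0|).add isp).mono' (by fun_prop) (ae_of_all _ fun p => ?_)
      have h1 := lip (s * p.1) 0
      have h2 := abs_sub_abs_le_abs_sub (h (s * p.1)) (h 0)
      rw [sub_zero, abs_mul, abs_of_pos hs0] at h1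
      simp only [Real.norm_eq_abs, Pi.add_apply]
      linarith
    have pt : ∀ p : ℝ × (Fin n → ℝ), |h (√(A p.2) * p.1) - h (s * p.1)|
        ≤ |p.1| * |√(A p.2) - s| := fun p => by
      refine (lip _ _).trans (le_of_eq ?_)
      rw [← sub_mul, abs_mul, mul_comm]
    have i3 : Integrable (fun p : ℝ × (Fin n → ℝ) => h (√(A p.2) * p.1) - h (s * p.1))
        (γ₁.prod P) := iDp.mono' (by fun_prop) (ae_of_all _ pt)
    have i1 : Integrable (fun p : ℝ × (Fin n → ℝ) => h (√(A p.2) * p.1)) (γ₁.prod P) := by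
      refine (i3.add i2).congr (ae_of_all _ fun p => ?_)
      simp
    rw [← integral_sub i1 i2]
    calc _ ≤ ∫ p : ℝ × (Fin n → ℝ), |h (√(A p.2) * p.1) - h (s * p.1)| ∂(γ₁.prod P) :=
          abs_integral_le_integral_abs
      _ ≤ ∫ p : ℝ × (Fin n → ℝ), |p.1| * |√(A p.2) - s| ∂(γ₁.prod P) :=
          integral_mono i3.abs iDp pt
      _ = _ := by
          rw [integral_prod_mul (f := fun z : ℝ => |z|) (g := fun z => |√(A z) - s|), hγ₁, gnn_abs]
  have hne : Nonempty {h : ℝ → ℝ // LipschitzWith 1 h} := ⟨⟨id, LipschitzWith.id⟩⟩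
  refine le_trans (b := √(2 / π) * ∫ z, |√(A z) - s| ∂P) ?_ ?_
  · unfold dW1
    exact ciSup_le fun h => main h.1 h.2
  set I := ∫ z, (a + b * |Γ * z| ^ γ) ^ 4 ∂γ₁ with hI
  have hI0 : 0 ≤ I := integral_nonneg fun z => by positivity
  have hI4 : (I ^ ((1:ℝ)/4)) ^ 2 = √I := by
    rw [← Real.rpow_natCast, ← Real.rpow_mul hI0, Real.sqrt_eq_rpow]; norm_num
  have h8 : √(8 / (σ2 * π)) = 2 * √(2 / π) * s⁻¹ := by
    have : 8 / (σ2 * π) = (2 * √(2 / π) * s⁻¹) ^ 2 := by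
      rw [mul_pow, mul_pow, Real.sq_sqrt (by positivity), inv_pow, hs2]
      field_simp; norm_num
    rw [this, Real.sqrt_sq (by positivity)]
  have hnV : σw ^ 2 / n * √(n * Var[f; γ₁]) = (√n)⁻¹ * σw ^ 2 * √(Var[f; γ₁]) := by
    rw [Real.sqrt_mul hn0.le]
    have : (0:ℝ) < √n := by positivity
    have h2 : (n:ℝ) = √n * √n := (Real.mul_self_sqrt hn0.le).symm
    nth_rewrite 1 [h2]
    field_simp
  have hVb : √(Var[f; γ₁]) ≤ 2 * Γ * √I := by
    calc √(Var[f; γ₁]) ≤ √(4 * Γ ^ 2 * I) := Real.sqrt_le_sqrt hV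
      _ = 2 * Γ * √I := by
        rw [Real.sqrt_mul (by positivity), show 4 * Γ ^ 2 = (2 * Γ) ^ 2 by ring,
          Real.sqrt_sq (by positivity)]
  have hΓb : Γ ≤ √(Γ ^ 2 + Γ ^ 4 * (2 + √(3 * (1 + 2 * Γ ^ 2 + 3 * Γ ^ 4)))) := by
    apply Real.le_sqrt_of_sq_le
    have : 0 ≤ Γ ^ 4 * (2 + √(3 * (1 + 2 * Γ ^ 2 + 3 * Γ ^ 4))) := by positivity
    linarith
  rw [hI4, h8]
  rw [hnV] at hED
  calc √(2 / π) * ∫ z, |√(A z) - s| ∂P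
      ≤ √(2 / π) * (s⁻¹ * ((√n)⁻¹ * σw ^ 2 * (2 * Γ * √I))) := by
        gcongr
        refine hED.trans ?_
        gcongr
    _ = (√n)⁻¹ * (2 * √(2 / π) * s⁻¹) * σw ^ 2 * Γ * √I := by ring
    _ ≤ _ := by gcongr
end

section
/- Fix d ≥ 1, an input x ∈ ℝ^d, and σ_w, σ_b > 0. Let F = n^{-1/2} · σ_w · Σ_{j=1}^n w_j τ(σ_w⟨w_j^{(0)}, x⟩ + σ_b b_j^{(0)}) + σ_b b, where the w_j, the coordinates w_{j,i}^{(0)} of the vectors w_j^{(0)} ∈ ℝ^d, the b_j^{(0)}, and b are all i.i.d. standard Gaussian random variables, and τ ∈ C²(ℝ) satisfies |τ(x)| ≤ a + b|x|^γ, |τ'(x)| ≤ a + b|x|^γ and |τ''(x)| ≤ a + b|x|^γ for all x ∈ ℝ, for some constants a, b, γ ≥ 0. Set Γ = (σ_w²‖x‖² + σ_b²)^{1/2} and σ² = σ_w² · E[τ²(ΓZ)] + σ_b² with Z ~ N(0,1), and let N ~ N(0, σ²). Then for every n ≥ 1, d_{KS}(F, N) ≤ (1/√n) · (2/σ²) ·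 σ_w² · √(Γ² + Γ⁴·(2 + √(3(1 + 2Γ² + 3Γ⁴)))) · ‖a + b|ΓZ|^γ‖_{L⁴}², where ‖X‖_{L⁴} = (E[X⁴])^{1/4}. -/
open MeasureTheory ProbabilityTheory Real

theorem map_sum_gauss (n : ℕ) (c : Fin n → ℝ) :
    Measure.map (fun w : Fin n → ℝ => ∑ j, w j * c j) (Measure.pi fun _ : Fin n => gaussianReal 0 1)
      = gaussianReal 0 (∑ j, c j ^ 2).toNNReal := by
  have hm : Measurable (fun w : Fin n → ℝ => ∑ j, w j * c j) := by fun_prop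
  have := Measure.isProbabilityMeasure_map (μ := Measure.pi fun _ : Fin n => gaussianReal 0 1)
    hm.aemeasurable
  apply Measure.ext_of_charFun
  ext t
  rw [charFun_apply_real, integral_map hm.aemeasurable (by fun_prop), charFun_gaussianReal]
  have : ∀ w : Fin n → ℝ, Complex.exp (t * ((∑ j, w j * c j : ℝ) : ℂ) * Complex.I)
      = ∏ j, Complex.exp (((t * c j : ℝ) : ℂ) * (w j : ℂ) * Complex.I) := by
    intro w
    rw [← Complex.exp_sum]
    congr 1
    push_cast
    rw [Finset.mul_sum, Finset.sum_mul]
    refine Finset.sum_congr rfl fun j _ => by ring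
  simp_rw [this]
  rw [integral_fintype_prod_eq_prod
    (f := fun (j : Fin n) (x : ℝ) => Complex.exp (((t * c j : ℝ) : ℂ) * (x : ℂ) * Complex.I))]
  simp_rw [← charFun_apply_real, charFun_gaussianReal]
  rw [← Complex.exp_sum]
  congr 1
  rw [Real.coe_toNNReal _ (by positivity)]
  push_cast
  simp only [mul_zero, zero_mul, zero_sub, Finset.sum_neg_distrib]
  rw [Finset.sum_mul, Finset.sum_div]
  congr 1
  refine Finset.sum_congr rfl fun j _ => by ring

theorem map_lin_gauss (v : NNReal) (e : ℝ) {α : Type*} [MeasurableSpace α] (μ : Measure α)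
    [IsProbabilityMeasure μ]
    (f : α → ℝ) (hf : Measurable f) (h : μ.map f = gaussianReal 0 v) :
    Measure.map (fun p : α × ℝ => f p.1 + e * p.2) (μ.prod (gaussianReal 0 1))
      = gaussianReal 0 (v + (e^2).toNNReal) := by
  have h1 : IndepFun (fun p : α × ℝ => f p.1) (fun p : α × ℝ => e * p.2)
      (μ.prod (gaussianReal 0 1)) :=
    indepFun_prod (X := f) (Y := fun y => e * y) hf (by fun_prop)
  have := gaussianReal_add_gaussianReal_of_indepFun (m₁ := 0) (m₂ := 0) (v₁ := v)
    (v₂ := (e^2).toNNReal) h1 ?_ ?_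
  · rw [add_zero] at this; exact this
  · rw [← h]
    have := Measure.map_map (μ := μ.prod (gaussianReal 0 1)) hf measurable_fst
    rw [Measure.map_fst_prod] at this
    simpa [Function.comp_def] using this.symm
  · have := Measure.map_map (μ := μ.prod (gaussianReal 0 1)) (g := fun y => e * y) (by fun_prop) measurable_snd
    rw [Measure.map_snd_prod] at this
    simp only [measure_univ, one_smul, Function.comp_def] at this
    rw [← this, gaussianReal_map_const_mul]
    simp
    rw [Real.toNNReal_of_nonneg (by positivity)]

theorem cs_interval (h : ℝ → ℝ) (hh : Continuous h) (L : ℝ) (hL : 0 < L) :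
    (∫ t in (0:ℝ)..L, h t) ^ 2 ≤ L * ∫ t in (0:ℝ)..L, h t ^ 2 := by
  set m := (∫ t in (0:ℝ)..L, h t) / L with hm
  have h0 : 0 ≤ ∫ t in (0:ℝ)..L, (h t - m) ^ 2 :=
    intervalIntegral.integral_nonneg hL.le fun t _ => sq_nonneg _
  have h1 : ∫ t in (0:ℝ)..L, (h t - m) ^ 2
      = (∫ t in (0:ℝ)..L, h t ^ 2) - 2 * m * (∫ t in (0:ℝ)..L, h t) + L * m ^ 2 := by
    have : ∀ t, (h t - m) ^ 2 = h t ^ 2 - 2 * m * h t + m ^ 2 := fun t => by ring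
    simp_rw [this]
    rw [intervalIntegral.integral_add, intervalIntegral.integral_sub,
      intervalIntegral.integral_const_mul]
    · simp
    all_goals apply Continuous.intervalIntegrable; fun_prop
  rw [h1] at h0
  have hI : (∫ t in (0:ℝ)..L, h t) = m * L := by rw [hm]; field_simp
  rw [hI] at h0 ⊢
  nlinarith

theorem pointwise_rot (f : ℝ → ℝ) (hf : ContDiff ℝ 1 f) (p : ℝ × ℝ) :
    ENNReal.ofReal ((f p.1 - f p.2) ^ 2) ≤ ENNReal.ofReal (π / 2) *
      ∫⁻ t in Set.Ioc 0 (π / 2), ENNReal.ofReal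
        ((deriv f (cos t * p.1 + sin t * p.2) * (- sin t * p.1 + cos t * p.2)) ^ 2) := by
  have hd : Continuous (deriv f) := hf.continuous_deriv le_rfl
  set h : ℝ → ℝ := fun t => deriv f (cos t * p.1 + sin t * p.2) * (- sin t * p.1 + cos t * p.2)
    with hh
  have hc : Continuous h := by fun_prop
  have hder : ∀ t ∈ Set.uIcc 0 (π/2), HasDerivAt (fun t => f (cos t * p.1 + sin t * p.2)) (h t) t := by
    intro t _
    have h1 : HasDerivAt f (deriv f (cos t * p.1 + sin t * p.2)) (cos t * p.1 + sin t * p.2) :=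
      (hf.differentiable one_ne_zero _).hasDerivAt
    have h2 : HasDerivAt (fun t => cos t * p.1 + sin t * p.2) (- sin t * p.1 + cos t * p.2) t :=
      ((hasDerivAt_cos t).mul_const _).add ((hasDerivAt_sin t).mul_const _)
    exact h1.comp t h2
  have hinteg := intervalIntegral.integral_eq_sub_of_hasDerivAt hder (hc.intervalIntegrable _ _)
  simp only [cos_pi_div_two, sin_pi_div_two, cos_zero, sin_zero, zero_mul, one_mul, zero_add,
    add_zero] at hinteg
  have hcs := cs_interval h hc (π/2) (by positivity)
  rw [hinteg, intervalIntegral.integral_of_le (by positivity)] at hcs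
  rw [← ofReal_integral_eq_lintegral_ofReal, ← ENNReal.ofReal_mul (by positivity)]
  · apply ENNReal.ofReal_le_ofReal
    calc _ = (f p.2 - f p.1) ^ 2 := by ring
      _ ≤ _ := hcs
  · exact (Continuous.integrableOn_Icc (by fun_prop)).mono_set Set.Ioc_subset_Icc_self
  · exact Filter.Eventually.of_forall fun t => sq_nonneg _

theorem lint_sq_gauss : ∫⁻ z, ENNReal.ofReal (z ^ 2) ∂gaussianReal 0 1 = 1 := by
  have h1 : Integrable (fun z : ℝ => z ^ 2) (gaussianReal 0 1) := by
    have := (memLp_id_gaussianReal (μ := 0) (v := 1) 2).integrable_sq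
    simpa using this
  rw [← ofReal_integral_eq_lintegral_ofReal h1 (Filter.Eventually.of_forall fun t => sq_nonneg _)]
  have := variance_fun_id_gaussianReal (μ := 0) (v := 1)
  rw [variance_eq_integral (by fun_prop)] at this
  simp at this
  simp [this]

theorem lint_poincare (f : ℝ → ℝ) (hf : ContDiff ℝ 1 f) :
    ∫⁻ p, ENNReal.ofReal ((f p.1 - f p.2) ^ 2) ∂((gaussianReal 0 1).prod (gaussianReal 0 1))
      ≤ ENNReal.ofReal ((π / 2) ^ 2) * ∫⁻ z, ENNReal.ofReal (deriv f z ^ 2) ∂gaussianReal 0 1 := by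
  have hd : Continuous (deriv f) := hf.continuous_deriv le_rfl
  refine (lintegral_mono fun p => pointwise_rot f hf p).trans ?_
  rw [lintegral_const_mul' _ _ ENNReal.ofReal_ne_top, lintegral_lintegral_swap]
  · have key : ∀ t : ℝ, ∫⁻ p : ℝ × ℝ, ENNReal.ofReal
        ((deriv f (cos t * p.1 + sin t * p.2) * (- sin t * p.1 + cos t * p.2)) ^ 2)
        ∂((gaussianReal 0 1).prod (gaussianReal 0 1))
        = ∫⁻ z, ENNReal.ofReal (deriv f z ^ 2) ∂gaussianReal 0 1 := by
      intro t
      have hr := IsGaussian.map_rotation_eq_self (μ := gaussianReal 0 1) (by simp) t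
      have hm : Measurable (fun q : ℝ × ℝ => ENNReal.ofReal (deriv f q.1 ^ 2) * ENNReal.ofReal (q.2 ^ 2)) := by
        fun_prop
      have h1 := lintegral_map (μ := (gaussianReal 0 1).prod (gaussianReal 0 1)) hm
        (ContinuousLinearMap.rotation (E := ℝ) t).continuous.measurable
      rw [hr] at h1
      rw [lintegral_prod_mul (f := fun z => ENNReal.ofReal (deriv f z ^ 2))
        (g := fun z => ENNReal.ofReal (z ^ 2)) (by fun_prop) (by fun_prop), lint_sq_gauss,
        mul_one] at h1
      rw [h1]
      refine lintegral_congr fun p => ?_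
      rw [ContinuousLinearMap.rotation_apply, ← ENNReal.ofReal_mul (sq_nonneg _), ← mul_pow]
      simp
    simp_rw [key]
    rw [lintegral_const]
    simp only [Measure.restrict_apply_univ, volume_Ioc, sub_zero]
    rw [mul_comm (∫⁻ z, _ ∂_), ← mul_assoc, ← ENNReal.ofReal_mul (by positivity), sq]
  · apply Continuous.aemeasurable
    apply ENNReal.continuous_ofReal.comp
    fun_prop

theorem poincare (f : ℝ → ℝ) (hf : ContDiff ℝ 1 f) (h2 : MemLp f 2 (gaussianReal 0 1))
    (h2' : Integrable (fun z => deriv f z ^ 2) (gaussianReal 0 1)) :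
    Var[f; gaussianReal 0 1] ≤ π ^ 2 / 8 * ∫ z, deriv f z ^ 2 ∂gaussianReal 0 1 := by
  set g := gaussianReal 0 1
  have hl := lint_poincare f hf
  have hi := h2.integrable_sq
  have hi1 := h2.integrable (by norm_num)
  have e : ∀ p : ℝ × ℝ, (f p.1 - f p.2) ^ 2 = (f p.1 ^ 2 + f p.2 ^ 2) - 2 * (f p.1 * f p.2) :=
    fun p => by ring
  have i1 : Integrable (fun p : ℝ × ℝ => f p.1 ^ 2) (g.prod g) := hi.comp_fst g
  have i2 : Integrable (fun p : ℝ × ℝ => f p.2 ^ 2) (g.prod g) := hi.comp_snd g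
  have i3 : Integrable (fun p : ℝ × ℝ => f p.1 * f p.2) (g.prod g) := hi1.mul_prod hi1
  have hinteg : Integrable (fun p : ℝ × ℝ => (f p.1 - f p.2) ^ 2) (g.prod g) := by
    simp_rw [e]
    exact (i1.add i2).sub (i3.const_mul 2)
  have hv : ∫ p, (f p.1 - f p.2) ^ 2 ∂(g.prod g) = 2 * Var[f; g] := by
    simp_rw [e]
    have i12 : Integrable (fun p : ℝ × ℝ => f p.1 ^ 2 + f p.2 ^ 2) (g.prod g) := i1.add i2
    rw [integral_sub i12 (i3.const_mul 2), integral_add i1 i2, integral_const_mul,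
      integral_prod_mul, integral_fun_fst (fun x => f x ^ 2), integral_fun_snd (fun x => f x ^ 2),
      variance_eq_sub h2]
    simp
    ring
  rw [← ofReal_integral_eq_lintegral_ofReal hinteg (Filter.Eventually.of_forall fun t => sq_nonneg _),
    ← ofReal_integral_eq_lintegral_ofReal h2' (Filter.Eventually.of_forall fun t => sq_nonneg _),
    ← ENNReal.ofReal_mul (by positivity), ENNReal.ofReal_le_ofReal_iff, hv] at hl
  · linarith
  · exact mul_nonneg (by positivity) (integral_nonneg fun _ => sq_nonneg _)

noncomputable def gcdf (x : ℝ) : ℝ := (gaussianReal 0 1).real (Set.Iic x)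

theorem gcdf_scale (s z : ℝ) (hs : 0 < s) :
    (gaussianReal 0 (s ^ 2).toNNReal (Set.Iic z)).toReal = gcdf (z / s) := by
  have h := gaussianReal_map_const_mul (μ := 0) (v := 1) s
  have hv : gaussianReal 0 (s ^ 2).toNNReal = Measure.map (s * ·) (gaussianReal 0 1) := by
    rw [h]
    simp
    rw [Real.toNNReal_of_nonneg (by positivity)]
  rw [hv, Measure.map_apply (by fun_prop) measurableSet_Iic, gcdf, Measure.real]
  congr 2
  ext y
  simp [le_div_iff₀ hs, mul_comm]

theorem gcdf_neg (x : ℝ) : gcdf (-x) = 1 - gcdf x := by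
  have h := gaussianReal_map_neg (μ := 0) (v := 1)
  rw [neg_zero] at h
  have h1 : (gaussianReal 0 1).real (Set.Iic (-x)) = (gaussianReal 0 1).real (Set.Ici x) := by
    conv_lhs => rw [← h]
    rw [map_measureReal_apply (by fun_prop) measurableSet_Iic]
    congr 1
    ext y; simp
  have := nullSingletonClass_gaussianReal (μ := 0) (v := 1) one_ne_zero
  rw [gcdf, h1, gcdf, ← probReal_compl_eq_one_sub measurableSet_Iic, Set.compl_Iic]
  exact measureReal_congr Ioi_ae_eq_Ici.symm

theorem gcdf_mono {x y : ℝ} (h : x ≤ y) : gcdf x ≤ gcdf y :=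
  measureReal_mono (Set.Iic_subset_Iic.2 h)

theorem gcdf_le_one (x : ℝ) : gcdf x ≤ 1 := measureReal_le_one

theorem gcdf_half {x : ℝ} (h : 0 ≤ x) : 1 / 2 ≤ gcdf x := by
  have h1 := gcdf_neg x
  have h2 := gcdf_mono (show -x ≤ x by linarith)
  linarith

theorem pdf_bound {t : ℝ} (ht : 0 < t) : gaussianPDFReal 0 1 t ≤ 3 / 10 / t := by
  rw [gaussianPDFReal]
  have h1 : (5/2 : ℝ) ≤ √(2 * π * ((1:NNReal):ℝ)) := by
    apply Real.le_sqrt_of_sq_le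
    have := Real.pi_gt_d2
    simp only [NNReal.coe_one]
    nlinarith
  have h2 : (√(2 * π * ((1:NNReal):ℝ)))⁻¹ ≤ 2/5 := by
    calc _ ≤ (5/2 : ℝ)⁻¹ := inv_anti₀ (by norm_num) h1
      _ = 2/5 := by norm_num
  have h3 : rexp (-(t - 0) ^ 2 / (2 * ((1:NNReal):ℝ))) ≤ (1 + t^2/2)⁻¹ := by
    have : -(t - 0) ^ 2 / (2 * ((1:NNReal):ℝ)) = - (t^2/2) := by simp; ring
    rw [this, Real.exp_neg]
    apply inv_anti₀ (by positivity)
    have := Real.add_one_le_exp (t^2/2)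
    linarith
  calc _ ≤ 2/5 * (1 + t^2/2)⁻¹ := by gcongr
    _ ≤ 3/10/t := by
      rw [← div_eq_mul_inv, div_le_div_iff₀ (by positivity) ht]
      nlinarith [sq_nonneg (t - 4/3)]

theorem gcdf_diff {x y : ℝ} (hx : 0 < x) (hxy : x ≤ y) :
    gcdf y - gcdf x ≤ 3 / 10 / x * (y - x) := by
  have h1 : gcdf y - gcdf x = (gaussianReal 0 1).real (Set.Ioc x y) := by
    rw [gcdf, gcdf, ← measureReal_sdiff (Set.Iic_subset_Iic.2 hxy) measurableSet_Iic]
    congr 1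
    ext z; simp [and_comm]
  rw [h1, Measure.real, gaussianReal_apply_eq_integral _ one_ne_zero, ENNReal.toReal_ofReal
    (setIntegral_nonneg measurableSet_Ioc fun t _ => gaussianPDFReal_nonneg _ _ _)]
  have h2 : ∫ t in Set.Ioc x y, gaussianPDFReal 0 1 t ≤ ∫ t in Set.Ioc x y, 3 / 10 / x := by
    apply setIntegral_mono_on (integrable_gaussianPDFReal 0 1).integrableOn
      (by simp) measurableSet_Ioc
    intro t ht
    refine (pdf_bound (hx.trans ht.1)).trans ?_
    exact div_le_div_of_nonneg_left (by norm_num) hx ht.1.le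
  refine h2.trans (le_of_eq ?_)
  simp [hxy]; ring

theorem gcdf_scale_pos {x q : ℝ} (hx : 0 < x) (hq : 1 ≤ q) :
    |gcdf (q * x) - gcdf x| ≤ 3 / 10 * (q - 1) ∧ |gcdf (q * x) - gcdf x| ≤ 1 / 2 := by
  have h0 : x ≤ q * x := by nlinarith
  have h1 := gcdf_mono h0
  have h2 := gcdf_half hx.le
  have h3 := gcdf_le_one (q * x)
  have h4 := gcdf_diff hx h0
  rw [abs_of_nonneg (by linarith)]
  refine ⟨h4.trans (le_of_eq ?_), by linarith⟩
  field_simp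

theorem gcdf_scale_all (x : ℝ) {q : ℝ} (hq : 1 ≤ q) :
    |gcdf (q * x) - gcdf x| ≤ 3 / 10 * (q - 1) ∧ |gcdf (q * x) - gcdf x| ≤ 1 / 2 := by
  rcases lt_trichotomy x 0 with hx | hx | hx
  · have h := gcdf_scale_pos (neg_pos.2 hx) hq
    rw [mul_neg, gcdf_neg, gcdf_neg] at h
    have e : 1 - gcdf (q * x) - (1 - gcdf x) = -(gcdf (q * x) - gcdf x) := by ring
    rwa [e, abs_neg] at h
  · subst hx; simp; linarith
  · exact gcdf_scale_pos hx hq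

theorem gcdf_ks (z : ℝ) {s r : ℝ} (hs : 0 < s) (hr : 0 < r) :
    |gcdf (z / s) - gcdf (z / r)| ≤ 7 / 10 * |s ^ 2 / r ^ 2 - 1| := by
  rcases le_total r s with h | h
  · have hq : 1 ≤ s / r := by rwa [one_le_div hr]
    have h1 := (gcdf_scale_all (z / s) hq).1
    have e : s / r * (z / s) = z / r := by field_simp
    rw [e, abs_sub_comm] at h1
    rw [← div_pow]
    refine h1.trans ?_
    rw [abs_of_nonneg (by nlinarith)]
    nlinarith
  · have hq : 1 ≤ r / s := by rwa [one_le_div hs]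
    obtain ⟨h1, h2⟩ := gcdf_scale_all (z / r) hq
    have e : r / s * (z / r) = z / s := by field_simp
    rw [e] at h1 h2
    have e2 : s ^ 2 / r ^ 2 = ((r / s) ^ 2)⁻¹ := by rw [← div_pow, ← inv_pow, inv_div]
    rw [e2]
    set q := r / s
    have hq2 : (q ^ 2)⁻¹ ≤ 1 := inv_le_one_of_one_le₀ (by nlinarith)
    rw [abs_of_nonpos (a := (q ^ 2)⁻¹ - 1) (by linarith)]
    rcases le_total q 3 with h3 | h3
    · refine h1.trans ?_
      have : 7 / 10 * -((q ^ 2)⁻¹ - 1) - 3/10 * (q - 1) = (q - 1) * (7 * (q + 1) - 3 * q ^ 2) / (10 * q ^ 2) := by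
        field_simp
        ring
      have : 0 ≤ (q - 1) * (7 * (q + 1) - 3 * q ^ 2) / (10 * q ^ 2) := by
        apply div_nonneg _ (by positivity)
        apply mul_nonneg (by linarith)
        nlinarith
      linarith
    · refine h2.trans ?_
      have : (q ^ 2)⁻¹ ≤ (9:ℝ)⁻¹ := inv_anti₀ (by norm_num) (by nlinarith)
      linarith

theorem gauss_ks (z : ℝ) {u v : ℝ} (hu : 0 < u) (hv : 0 < v) :
    |(gaussianReal 0 u.toNNReal (Set.Iic z)).toReal - (gaussianReal 0 v.toNNReal (Set.Iic z)).toReal|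
      ≤ 7 / 10 / v * |u - v| := by
  have h := gcdf_ks z (Real.sqrt_pos.2 hu) (Real.sqrt_pos.2 hv)
  rw [← gcdf_scale _ _ (Real.sqrt_pos.2 hu), ← gcdf_scale _ _ (Real.sqrt_pos.2 hv), Real.sq_sqrt hu.le,
    Real.sq_sqrt hv.le] at h
  refine h.trans (le_of_eq ?_)
  have : u / v - 1 = (u - v) / v := by field_simp
  rw [this, abs_div, abs_of_pos hv]
  ring

theorem growth_memLp (a b γ Γ : ℝ) (hγ : 0 ≤ γ) :
    MemLp (fun z => a + b * |Γ * z| ^ γ) 4 (gaussianReal 0 1) := by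
  have h0 : MemLp (fun z : ℝ => |Γ * z| ^ γ) 4 (gaussianReal 0 1) := by
    rcases hγ.eq_or_lt with h | h
    · subst h; simp only [rpow_zero]; exact memLp_const 1
    · have h1 : MemLp (fun z : ℝ => Γ * z) (4 * ENNReal.ofReal γ) (gaussianReal 0 1) :=
        (memLp_id_gaussianReal' (μ := 0) (v := 1) (4 * ENNReal.ofReal γ)
          (ENNReal.mul_ne_top (by norm_num) ENNReal.ofReal_ne_top)).const_mul Γ
      have h2 := h1.norm_rpow_div (ENNReal.ofReal γ)
      rw [ENNReal.mul_div_cancel_right (by simpa using h) ENNReal.ofReal_ne_top,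
        ENNReal.toReal_ofReal hγ] at h2
      exact h2
  exact (memLp_const a).add (h0.const_mul b)

theorem growth_integrable (a b γ Γ : ℝ) (hγ : 0 ≤ γ) :
    Integrable (fun z => (a + b * |Γ * z| ^ γ) ^ 4) (gaussianReal 0 1) := by
  have := (growth_memLp a b γ Γ hγ).integrable_norm_pow (p := 4) (by norm_num)
  refine this.congr (Filter.Eventually.of_forall fun z => ?_)
  simp only [Real.norm_eq_abs]
  exact Even.pow_abs (by decide) _

theorem tau_sq_memLp (τ : ℝ → ℝ) (a b γ Γ : ℝ) (hγ : 0 ≤ γ) (hτ : Continuous τ)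
    (hτ0 : ∀ y : ℝ, |τ y| ≤ a + b * |y| ^ γ) :
    MemLp (fun z => τ (Γ * z) ^ 2) 2 (gaussianReal 0 1) := by
  rw [memLp_two_iff_integrable_sq (by apply Continuous.aestronglyMeasurable; fun_prop)]
  refine (growth_integrable a b γ Γ hγ).mono' (by apply Continuous.aestronglyMeasurable; fun_prop)
    (Filter.Eventually.of_forall fun z => ?_)
  rw [← pow_mul, norm_pow, Real.norm_eq_abs]
  exact pow_le_pow_left₀ (abs_nonneg _) (hτ0 _) _

theorem tau_var (τ : ℝ → ℝ) (a b γ Γ : ℝ) (hγ : 0 ≤ γ) (hτ : ContDiff ℝ 2 τ)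
    (hτ0 : ∀ y : ℝ, |τ y| ≤ a + b * |y| ^ γ)
    (hτ1 : ∀ y : ℝ, |deriv τ y| ≤ a + b * |y| ^ γ) :
    Var[fun z => τ (Γ * z) ^ 2; gaussianReal 0 1]
      ≤ π ^ 2 / 8 * (4 * Γ ^ 2 * ∫ z, (a + b * |Γ * z| ^ γ) ^ 4 ∂gaussianReal 0 1) := by
  have hτ' : ContDiff ℝ 1 τ := hτ.of_le (by norm_num)
  have hd : Continuous (deriv τ) := hτ'.continuous_deriv le_rfl
  have hc : Continuous τ := hτ.continuous
  have hf : ContDiff ℝ 1 (fun z => τ (Γ * z) ^ 2) := by fun_prop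
  have hder : ∀ z, deriv (fun z => τ (Γ * z) ^ 2) z = 2 * τ (Γ * z) * (deriv τ (Γ * z) * Γ) := by
    intro z
    have h1 : HasDerivAt τ (deriv τ (Γ * z)) (Γ * z) :=
      (hτ'.differentiable one_ne_zero _).hasDerivAt
    have h2 : HasDerivAt (fun z => Γ * z) Γ z := by simpa using (hasDerivAt_id z).const_mul Γ
    have h3 : HasDerivAt (fun z => τ (Γ * z) ^ 2) _ z := (h1.comp z h2).pow 2
    rw [h3.deriv]
    simp
  have hb : ∀ z, deriv (fun z => τ (Γ * z) ^ 2) z ^ 2 ≤ 4 * Γ ^ 2 * (a + b * |Γ * z| ^ γ) ^ 4 := by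
    intro z
    rw [hder]
    have e : (2 * τ (Γ * z) * (deriv τ (Γ * z) * Γ)) ^ 2
        = 4 * Γ ^ 2 * (|τ (Γ * z)| ^ 2 * |deriv τ (Γ * z)| ^ 2) := by
      rw [sq_abs, sq_abs]; ring
    have e2 : (a + b * |Γ * z| ^ γ) ^ 4 = (a + b * |Γ * z| ^ γ) ^ 2 * (a + b * |Γ * z| ^ γ) ^ 2 := by
      ring
    rw [e, e2]
    have := hτ0 (Γ * z)
    have := hτ1 (Γ * z)
    gcongr
  have hi := (growth_integrable a b γ Γ hγ).const_mul (4 * Γ ^ 2)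
  have hi' : Integrable (fun z => deriv (fun z => τ (Γ * z) ^ 2) z ^ 2) (gaussianReal 0 1) := by
    refine hi.mono' ?_ (Filter.Eventually.of_forall fun z => ?_)
    · simp_rw [hder]
      apply Continuous.aestronglyMeasurable; fun_prop
    · rw [Real.norm_eq_abs, abs_of_nonneg (sq_nonneg _)]; exact hb z
  refine (poincare _ hf (tau_sq_memLp τ a b γ Γ hγ hc hτ0) hi').trans ?_
  gcongr
  rw [← integral_const_mul]
  exact integral_mono hi' hi hb

theorem gauss_scale_preserving (Γ : ℝ) :
    MeasurePreserving (fun z => Γ * z) (gaussianReal 0 1) (gaussianReal 0 (Γ ^ 2).toNNReal) := by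
  refine ⟨by fun_prop, ?_⟩
  have h := gaussianReal_map_const_mul (μ := 0) (v := 1) Γ
  rw [h]
  simp
  rw [Real.toNNReal_of_nonneg (by positivity)]

/-- law of one hidden unit -/
theorem unit_preserving (d : ℕ) (x : Fin d → ℝ) (σw σb : ℝ) (Γ : ℝ)
    (hΓ : Γ = Real.sqrt (σw ^ 2 * (∑ i, (x i) ^ 2) + σb ^ 2)) :
    MeasurePreserving (fun p : (Fin d → ℝ) × ℝ => σw * (∑ i, p.1 i * x i) + σb * p.2)
      ((Measure.pi fun _ : Fin d => gaussianReal 0 1).prod (gaussianReal 0 1))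
      (gaussianReal 0 (Γ ^ 2).toNNReal) := by
  refine ⟨by fun_prop, ?_⟩
  have h := map_lin_gauss _ σb _ (fun w : Fin d → ℝ => ∑ j, w j * (σw * x j)) (by fun_prop)
    (map_sum_gauss d (fun j => σw * x j))
  rw [← Real.toNNReal_add (by positivity) (by positivity)] at h
  rw [hΓ, Real.sq_sqrt (by positivity)]
  convert h using 2
  · ext p
    congr 1
    rw [Finset.mul_sum]
    exact Finset.sum_congr rfl fun j _ => by ring
  · congr 2
    rw [Finset.mul_sum]
    exact Finset.sum_congr rfl fun j _ => by ring

theorem reorder_preserving {A B C D E : Type*} [MeasurableSpace A] [MeasurableSpace B]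
    [MeasurableSpace C] [MeasurableSpace D] [MeasurableSpace E]
    (μA : Measure A) (μB : Measure B) (μC : Measure C) (μD : Measure D) (μE : Measure E)
    [IsProbabilityMeasure μA] [IsProbabilityMeasure μB] [IsProbabilityMeasure μC]
    [IsProbabilityMeasure μD] [IsProbabilityMeasure μE] (f : B × C → E)
    (hf : MeasurePreserving f (μB.prod μC) μE) :
    MeasurePreserving (fun ω : A × B × C × D => (f (ω.2.1, ω.2.2.1), (ω.1, ω.2.2.2)))
      (μA.prod (μB.prod (μC.prod μD))) (μE.prod (μA.prod μD)) := by
  have h1 : MeasurePreserving (fun ω : B × C × D => ((ω.1, ω.2.1), ω.2.2))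
      (μB.prod (μC.prod μD)) ((μB.prod μC).prod μD) :=
    (measurePreserving_prodAssoc μB μC μD).symm
  have h2 : MeasurePreserving (fun ω : B × C × D => (f (ω.1, ω.2.1), ω.2.2))
      (μB.prod (μC.prod μD)) (μE.prod μD) :=
    (hf.prod (MeasurePreserving.id μD)).comp h1
  have h3 := (MeasurePreserving.id μA).prod h2
  have h4 : MeasurePreserving (fun ω : A × E × D => ((ω.1, ω.2.1), ω.2.2))
      (μA.prod (μE.prod μD)) ((μA.prod μE).prod μD) :=
    (measurePreserving_prodAssoc μA μE μD).symm
  have h5 := (Measure.measurePreserving_swap (μ := μA) (ν := μE)).prod (MeasurePreserving.id μD)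
  have h6 := measurePreserving_prodAssoc μE μA μD
  exact h6.comp (h5.comp (h4.comp h3))

theorem layer_preserving (n d : ℕ) (x : Fin d → ℝ) (σw σb : ℝ) (Γ : ℝ)
    (hΓ : Γ = Real.sqrt (σw ^ 2 * (∑ i, (x i) ^ 2) + σb ^ 2)) :
    MeasurePreserving (fun p : (Fin n → (Fin d → ℝ)) × (Fin n → ℝ) =>
        fun j => σw * (∑ i, p.1 j i * x i) + σb * p.2 j)
      ((Measure.pi fun _ : Fin n => Measure.pi fun _ : Fin d => gaussianReal 0 1).prod
        (Measure.pi fun _ : Fin n => gaussianReal 0 1))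
      (Measure.pi fun _ : Fin n => gaussianReal 0 (Γ ^ 2).toNNReal) := by
  have h1 := (measurePreserving_arrowProdEquivProdArrow (Fin d → ℝ) ℝ (Fin n)
    (fun _ => Measure.pi fun _ : Fin d => gaussianReal 0 1) (fun _ => gaussianReal 0 1)).symm
  have h2 := measurePreserving_pi (ι := Fin n) _ _ (fun _ => unit_preserving d x σw σb Γ hΓ)
  exact h2.comp h1

theorem output_law (n : ℕ) (hn : 1 ≤ n) (σw σb : ℝ) (c : Fin n → ℝ) :
    Measure.map (fun p : (Fin n → ℝ) × ℝ => (Real.sqrt n)⁻¹ * σw * (∑ j, p.1 j * c j) + σb * p.2)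
      ((Measure.pi fun _ : Fin n => gaussianReal 0 1).prod (gaussianReal 0 1))
      = gaussianReal 0 (σw ^ 2 / n * (∑ j, c j ^ 2) + σb ^ 2).toNNReal := by
  have h := map_lin_gauss _ σb _ (fun w : Fin n → ℝ => ∑ j, w j * ((Real.sqrt n)⁻¹ * σw * c j))
    (by fun_prop) (map_sum_gauss n (fun j => (Real.sqrt n)⁻¹ * σw * c j))
  rw [← Real.toNNReal_add (by positivity) (by positivity)] at h
  convert h using 2
  · ext p
    congr 1
    rw [Finset.mul_sum]
    exact Finset.sum_congr rfl fun j _ => by ring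
  · congr 2
    rw [Finset.mul_sum]
    refine Finset.sum_congr rfl fun j _ => ?_
    rw [mul_pow, mul_pow, inv_pow, Real.sq_sqrt (by positivity)]
    ring

theorem l1_dev (n : ℕ) (hn : 1 ≤ n) (ν : Measure ℝ) [IsProbabilityMeasure ν] (f : ℝ → ℝ)
    (hf : MemLp f 2 ν) (A B : ℝ) (hA : 0 ≤ A) :
    Integrable (fun y : Fin n → ℝ => |(A / n * (∑ j, f (y j)) + B) - (A * (∫ t, f t ∂ν) + B)|)
      (Measure.pi fun _ : Fin n => ν) ∧
    ∫ y : Fin n → ℝ, |(A / n * (∑ j, f (y j)) + B) - (A * (∫ t, f t ∂ν) + B)|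
      ∂(Measure.pi fun _ : Fin n => ν) ≤ A * (Real.sqrt n)⁻¹ * Real.sqrt (Var[f; ν]) := by
  have hn0 : (0:ℝ) < n := by exact_mod_cast hn
  set P := Measure.pi fun _ : Fin n => ν
  have hm : ∀ j : Fin n, MemLp (fun y : Fin n → ℝ => f (y j)) 2 P := fun j =>
    hf.comp_measurePreserving (measurePreserving_eval (fun _ : Fin n => ν) j)
  have hs : MemLp (fun y : Fin n → ℝ => ∑ j, f (y j)) 2 P := memLp_finsetSum _ fun j _ => hm j
  have hmean : ∫ y, ∑ j, f (y j) ∂P = n * ∫ t, f t ∂ν := by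
    rw [integral_finsetSum _ fun j _ => (hm j).integrable (by norm_num)]
    have : ∀ j : Fin n, ∫ y, f (y j) ∂P = ∫ t, f t ∂ν := fun j =>
      integral_comp_eval (μ := fun _ : Fin n => ν) hf.aestronglyMeasurable
    simp [this]
  have hvar : Var[fun y : Fin n → ℝ => ∑ j, f (y j); P] = n * Var[f; ν] := by
    have := variance_sum_pi (μ := fun _ : Fin n => ν) (X := fun _ => f) fun _ => hf
    have e : (fun y : Fin n → ℝ => ∑ j, f (y j)) = ∑ j, fun y : Fin n → ℝ => f (y j) := by
      ext y; simp
    rw [e, this]; simp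
  set X : (Fin n → ℝ) → ℝ :=
    fun y => (A / n * (∑ j, f (y j)) + B) - (A * (∫ t, f t ∂ν) + B) with hX
  have hXe : ∀ y, X y = A / n * ((∑ j, f (y j)) - ∫ y, ∑ j, f (y j) ∂P) := by
    intro y; rw [hmean, hX]; field_simp; ring
  have hXm : MemLp X 2 P := ((hs.const_mul _).add (memLp_const B)).sub (memLp_const _)
  have hX2 : ∫ y, X y ^ 2 ∂P = (A / n) ^ 2 * (n * Var[f; ν]) := by
    rw [← hvar, variance_eq_integral hs.aestronglyMeasurable.aemeasurable, ← integral_const_mul]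
    refine integral_congr_ae (Filter.Eventually.of_forall fun y => ?_)
    simp only [hXe, mul_pow]
  refine ⟨hXm.abs.integrable (by norm_num), ?_⟩
  have h0 := variance_nonneg (fun y => |X y|) P
  have hXa : MemLp (fun y => |X y|) 2 P := hXm.abs
  rw [variance_eq_sub hXa] at h0
  have e2 : ∫ y, ((fun y => |X y|) ^ 2) y ∂P = ∫ y, X y ^ 2 ∂P := by simp
  rw [e2, hX2] at h0
  have h1 : ∫ y, |X y| ∂P ≤ Real.sqrt ((A / n) ^ 2 * (n * Var[f; ν])) :=
    Real.le_sqrt_of_sq_le (by linarith)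
  refine h1.trans (le_of_eq ?_)
  have e3 : (A / n) ^ 2 * (n * Var[f; ν]) = (A * (Real.sqrt n)⁻¹) ^ 2 * Var[f; ν] := by
    rw [mul_pow, inv_pow, Real.sq_sqrt hn0.le]; field_simp
  rw [e3, Real.sqrt_mul (sq_nonneg _), Real.sqrt_sq (by positivity)]


theorem gaussian_nn_ks_bound
    (d : ℕ) (hd : 1 ≤ d) (x : Fin d → ℝ) (σw σb : ℝ) (hσw : 0 < σw) (hσb : 0 < σb)
    (τ : ℝ → ℝ) (a b γ : ℝ) (ha : 0 ≤ a) (hb : 0 ≤ b) (hγ : 0 ≤ γ)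
    (hτ : ContDiff ℝ 2 τ)
    (hτ0 : ∀ y : ℝ, |τ y| ≤ a + b * |y| ^ γ)
    (hτ1 : ∀ y : ℝ, |deriv τ y| ≤ a + b * |y| ^ γ)
    (hτ2 : ∀ y : ℝ, |deriv (deriv τ) y| ≤ a + b * |y| ^ γ)
    (Γ : ℝ) (hΓ : Γ = Real.sqrt (σw ^ 2 * (∑ i, (x i) ^ 2) + σb ^ 2))
    (σ2 : ℝ) (hσ2 : σ2 = σw ^ 2 * (∫ z, (τ (Γ * z)) ^ 2 ∂gaussianReal 0 1) + σb ^ 2)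
    (n : ℕ) (hn : 1 ≤ n) :
    dKS
      (Measure.map
        (fun ω : (Fin n → ℝ) × (Fin n → (Fin d → ℝ)) × (Fin n → ℝ) × ℝ =>
          (Real.sqrt n)⁻¹ * σw *
              (∑ j, ω.1 j * τ (σw * (∑ i, ω.2.1 j i * x i) + σb * ω.2.2.1 j))
            + σb * ω.2.2.2)
        ((Measure.pi fun _ : Fin n => gaussianReal 0 1).prod
          ((Measure.pi fun _ : Fin n => Measure.pi fun _ : Fin d => gaussianReal 0 1).prod
            ((Measure.pi fun _ : Fin n => gaussianReal 0 1).prod (gaussianReal 0 1)))))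
      (gaussianReal 0 σ2.toNNReal)
      ≤ (Real.sqrt n)⁻¹
        * (2 / σ2)
        * σw ^ 2
        * Real.sqrt (Γ ^ 2 + Γ ^ 4 * (2 + Real.sqrt (3 * (1 + 2 * Γ ^ 2 + 3 * Γ ^ 4))))
        * ((∫ z, (a + b * |Γ * z| ^ γ) ^ 4 ∂gaussianReal 0 1) ^ ((1:ℝ)/4)) ^ 2 := by
  have hc : Continuous τ := hτ.continuous
  have hn0 : (0:ℝ) < n := by exact_mod_cast hn
  have hΓ0 : 0 ≤ Γ := hΓ ▸ Real.sqrt_nonneg _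
  have hσ2pos : 0 < σ2 := by
    rw [hσ2]
    have : 0 ≤ ∫ z, (τ (Γ * z)) ^ 2 ∂gaussianReal 0 1 := integral_nonneg fun _ => sq_nonneg _
    positivity
  have hmp := gauss_scale_preserving Γ
  set ν := gaussianReal 0 (Γ ^ 2).toNNReal with hν
  have hτm : AEStronglyMeasurable (fun y => τ y ^ 2) ν := by
    apply Continuous.aestronglyMeasurable; fun_prop
  have hmem : MemLp (fun y => τ y ^ 2) 2 ν := by
    have h1 := tau_sq_memLp τ a b γ Γ hγ hc hτ0
    rw [← hmp.map_eq] at hτm ⊢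
    exact (memLp_map_measure_iff hτm hmp.aemeasurable).2 h1
  have hinteg : ∫ z, (τ (Γ * z)) ^ 2 ∂gaussianReal 0 1 = ∫ y, τ y ^ 2 ∂ν := by
    rw [← hmp.map_eq] at hτm ⊢
    rw [integral_map hmp.aemeasurable hτm]
  have hvar : Var[fun y => τ y ^ 2; ν] = Var[fun z => τ (Γ * z) ^ 2; gaussianReal 0 1] := by
    rw [← hmp.map_eq] at hτm ⊢
    rw [variance_map hτm.aemeasurable hmp.aemeasurable]
    rfl
  set M := ∫ z, (a + b * |Γ * z| ^ γ) ^ 4 ∂gaussianReal 0 1 with hM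
  have hM0 : 0 ≤ M := integral_nonneg fun _ => by positivity
  have hV := tau_var τ a b γ Γ hγ hτ hτ0 hτ1
  rw [← hvar] at hV
  obtain ⟨hdi, hdev⟩ := l1_dev n hn ν (fun y => τ y ^ 2) hmem (σw ^ 2) (σb ^ 2) (by positivity)
  rw [← hinteg, ← hσ2] at hdi hdev
  set W := Measure.pi fun _ : Fin n => gaussianReal 0 1 with hW
  set P := Measure.pi fun _ : Fin n => ν with hP
  set S : (Fin n → ℝ) → ℝ := fun y => σw ^ 2 / n * (∑ j, τ (y j) ^ 2) + σb ^ 2 with hS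
  have hSpos : ∀ y, 0 < S y := fun y => by rw [hS]; positivity
  -- final numeric bound
  have hfin : 7 / 10 / σ2 * (σw ^ 2 * (Real.sqrt n)⁻¹ * Real.sqrt (Var[fun y => τ y ^ 2; ν]))
      ≤ (Real.sqrt n)⁻¹ * (2 / σ2) * σw ^ 2
        * Real.sqrt (Γ ^ 2 + Γ ^ 4 * (2 + Real.sqrt (3 * (1 + 2 * Γ ^ 2 + 3 * Γ ^ 4))))
        * (M ^ ((1:ℝ)/4)) ^ 2 := by
    have e1 : (M ^ ((1:ℝ)/4)) ^ 2 = Real.sqrt M := by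
      rw [← Real.rpow_natCast, ← Real.rpow_mul hM0, Real.sqrt_eq_rpow]; norm_num
    have e2 : Γ ≤ Real.sqrt (Γ ^ 2 + Γ ^ 4 * (2 + Real.sqrt (3 * (1 + 2 * Γ ^ 2 + 3 * Γ ^ 4)))) := by
      apply Real.le_sqrt_of_sq_le
      have : 0 ≤ Γ ^ 4 * (2 + Real.sqrt (3 * (1 + 2 * Γ ^ 2 + 3 * Γ ^ 4))) := by positivity
      linarith
    have e3 : Real.sqrt (Var[fun y => τ y ^ 2; ν]) ≤ 20 / 7 * (Γ * Real.sqrt M) := by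
      apply Real.sqrt_le_iff.2 ⟨by positivity, hV.trans ?_⟩
      have hpi : π ^ 2 ≤ 10 := by have := Real.pi_lt_d2; have := Real.pi_pos; nlinarith
      have h0 : 0 ≤ Γ ^ 2 * M := by positivity
      rw [mul_pow, mul_pow, Real.sq_sqrt hM0]
      nlinarith
    rw [e1]
    calc _ ≤ 7 / 10 / σ2 * (σw ^ 2 * (Real.sqrt n)⁻¹ * (20 / 7 * (Γ * Real.sqrt M))) := by gcongr
      _ = (Real.sqrt n)⁻¹ * (2 / σ2) * σw ^ 2 * Γ * Real.sqrt M := by ring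
      _ ≤ _ := by gcongr
  refine le_trans ?_ hfin
  refine (ciSup_le fun z => ?_).trans (mul_le_mul_of_nonneg_left hdev (by positivity))
  -- conditional law
  have hre := reorder_preserving W
    (Measure.pi fun _ : Fin n => Measure.pi fun _ : Fin d => gaussianReal 0 1) W (gaussianReal 0 1) P
    _ (layer_preserving n d x σw σb Γ hΓ)
  set G : (Fin n → ℝ) × ((Fin n → ℝ) × ℝ) → ℝ :=
    fun q => (Real.sqrt n)⁻¹ * σw * (∑ j, q.2.1 j * τ (q.1 j)) + σb * q.2.2 with hG
  have hGm : Measurable G := by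
    apply Continuous.measurable; fun_prop
  have hlaw : Measure.map (fun ω : (Fin n → ℝ) × (Fin n → (Fin d → ℝ)) × (Fin n → ℝ) × ℝ =>
          (Real.sqrt n)⁻¹ * σw *
              (∑ j, ω.1 j * τ (σw * (∑ i, ω.2.1 j i * x i) + σb * ω.2.2.1 j))
            + σb * ω.2.2.2)
        (W.prod ((Measure.pi fun _ : Fin n => Measure.pi fun _ : Fin d => gaussianReal 0 1).prod
            (W.prod (gaussianReal 0 1))))
      = Measure.map G (P.prod (W.prod (gaussianReal 0 1))) := by
    rw [← hre.map_eq, Measure.map_map hGm hre.measurable]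
    rfl
  have hset : MeasurableSet (G ⁻¹' Set.Iic z) := hGm measurableSet_Iic
  have hsec : ∀ y, (W.prod (gaussianReal 0 1)) (Prod.mk y ⁻¹' (G ⁻¹' Set.Iic z))
      = gaussianReal 0 (S y).toNNReal (Set.Iic z) := by
    intro y
    rw [hS, ← output_law n hn σw σb (fun j => τ (y j)),
      Measure.map_apply (by fun_prop) measurableSet_Iic]
    rfl
  have hmeas : Measurable fun y => gaussianReal 0 (S y).toNNReal (Set.Iic z) := by
    simp_rw [← hsec]
    exact measurable_measure_prodMk_left hset
  have hval : (Measure.map G (P.prod (W.prod (gaussianReal 0 1))) (Set.Iic z)).toReal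
      = ∫ y, (gaussianReal 0 (S y).toNNReal (Set.Iic z)).toReal ∂P := by
    rw [Measure.map_apply hGm measurableSet_Iic, Measure.prod_apply hset,
      integral_toReal hmeas.aemeasurable (Filter.Eventually.of_forall fun y => measure_lt_top _ _)]
    simp_rw [hsec]
  have hI : Integrable (fun y => (gaussianReal 0 (S y).toNNReal (Set.Iic z)).toReal) P := by
    refine Integrable.of_bound hmeas.ennreal_toReal.aestronglyMeasurable 1
      (Filter.Eventually.of_forall fun y => ?_)
    rw [Real.norm_eq_abs, abs_of_nonneg ENNReal.toReal_nonneg]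
    exact measureReal_le_one
  have hcst : (gaussianReal 0 σ2.toNNReal (Set.Iic z)).toReal
      = ∫ _ : Fin n → ℝ, (gaussianReal 0 σ2.toNNReal (Set.Iic z)).toReal ∂P := by simp
  rw [hlaw, hval, hcst, ← integral_sub hI (integrable_const _), ← integral_const_mul]
  refine abs_integral_le_integral_abs.trans ?_
  refine integral_mono (hI.sub (integrable_const _)).abs (hdi.const_mul _) fun y => ?_
  exact gauss_ks z (hSpos y) hσ2pos
end
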